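/- Every Möbius ladder M_n (n ≥ 3), every double wheel DW_n (n ≥ 3), and every graph in the class W is almost-planar; consequently, every 3-connected nonplanar minor of a Möbius ladder, of a double wheel, or of a graph in W is almost-planar. -/

import Mathlib

open SimpleGraph

/-- `H` is a minor of `G` (branch-set / model definition). -/
def IsMinor {W V : Type*} (H : SimpleGraph W) (G : SimpleGraph V) : Prop :=
  ∃ B : W → Set V,
    (∀ w, (B w).Nonempty) ∧
    (∀ w, (G.induce (B w)).Connected) ∧
    (Pairwise fun w₁ w₂ => Disjoint (B w₁) (B w₂)) ∧
    (∀ ⦃w₁ w₂ : W⦄, H.Adj w₁ w₂ → ∃ v₁ ∈ B w₁, ∃ v₂ ∈ B w₂, G.Adj v₁ v₂)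

def K5 : SimpleGraph (Fin 5) := ⊤

def K33 : SimpleGraph (Fin 3 ⊕ Fin 3) := completeBipartiteGraph (Fin 3) (Fin 3)

/-- A graph is planar iff it has neither a `K₅` nor a `K₃,₃` minor (Wagner's theorem). -/
def Planar {V : Type*} (G : SimpleGraph V) : Prop := ¬ IsMinor K5 G ∧ ¬ IsMinor K33 G

/-- `G / uw`: contract the edge `uw`, merging `w` into `u` (the vertex `w` becomes isolated). -/
def contractEdge {V : Type*} (G : SimpleGraph V) (u w : V) : SimpleGraph V :=
  SimpleGraph.fromRel fun a b =>
    a ≠ w ∧ b ≠ w ∧ (G.Adj a b ∨ (a = u ∧ G.Adj w b) ∨ (b = u ∧ G.Adj a w))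

/-- A nonplanar graph is almost-planar if for every edge, deletion or contraction is planar. -/
def AlmostPlanar {V : Type*} (G : SimpleGraph V) : Prop :=
  ¬ Planar G ∧ ∀ ⦃u v : V⦄, G.Adj u v →
    (Planar (G.deleteEdges {s(u, v)}) ∨ Planar (contractEdge G u v))

/-- `G` is `k`-connected: more than `k` vertices and deleting fewer than `k` vertices
leaves a connected graph. -/
def KConnected {V : Type*} (G : SimpleGraph V) (k : ℕ) : Prop :=
  k < Nat.card V ∧ ∀ s : Set V, s.ncard < k → (G.induce (sᶜ)).Connected

/-- `{G[A], G[B]}` is a `k`-separation of `G`. -/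
def IsSep {V : Type*} (G : SimpleGraph V) (k : ℕ) (A B : Set V) : Prop :=
  A ∪ B = Set.univ ∧ A ≠ Set.univ ∧ B ≠ Set.univ ∧ (A ∩ B).ncard = k ∧
  ∀ ⦃x y : V⦄, G.Adj x y → (x ∈ A ∧ y ∈ A) ∨ (x ∈ B ∧ y ∈ B)

/-- The star `K_{1,3}`, with centre `0`. -/
def K13 : SimpleGraph (Fin 4) := SimpleGraph.fromRel fun a _ => a = 0

def InternallyFourConnected {V : Type*} (G : SimpleGraph V) : Prop :=
  KConnected G 3 ∧ 5 ≤ Nat.card V ∧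
  ∀ A B : Set V, IsSep G 3 A B →
    Xor' (Nonempty (G.induce A ≃g K13)) (Nonempty (G.induce B ≃g K13))

/-- The wheel `W_n`: a cycle of length `n` plus a hub (`none`) joined to all of it. -/
def wheelGraph (n : ℕ) : SimpleGraph (Option (Fin n)) :=
  SimpleGraph.fromRel fun a b =>
    match a, b with
    | some i, some j => j.val = (i.val + 1) % n
    | none, some _ => True
    | _, _ => False

def IsWheel {V : Type*} (G : SimpleGraph V) : Prop :=
  ∃ n, 3 ≤ n ∧ Nonempty (G ≃g wheelGraph n)

/-- The double wheel `DW_n`: a cycle of length `n` plus two adjacent hubs joined to all of it. -/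
def doubleWheel (n : ℕ) : SimpleGraph (Fin n ⊕ Fin 2) :=
  SimpleGraph.fromRel fun a b =>
    match a, b with
    | .inl i, .inl j => j.val = (i.val + 1) % n
    | .inl _, .inr _ => True
    | .inr _, .inr _ => True
    | _, _ => False

/-- The Möbius ladder `M_n`: a cycle of length `2n` plus all "opposite" chords. -/
def mobiusLadder (n : ℕ) : SimpleGraph (Fin (2 * n)) :=
  SimpleGraph.fromRel fun i j =>
    j.val = (i.val + 1) % (2 * n) ∨ j.val = (i.val + n) % (2 * n)

/-- `C²_m`: a cycle of length `m` plus all chords between vertices at distance two. -/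
def squareCycle (m : ℕ) : SimpleGraph (Fin m) :=
  SimpleGraph.fromRel fun i j =>
    j.val = (i.val + 1) % m ∨ j.val = (i.val + 2) % m

/-- The alternating double wheel `AW_{2n}`: a cycle of length `2n` plus two adjacent hubs,
each joined to alternating cycle vertices. -/
def altDoubleWheel (n : ℕ) : SimpleGraph (Fin (2 * n) ⊕ Fin 2) :=
  SimpleGraph.fromRel fun a b =>
    match a, b with
    | .inl i, .inl j => j.val = (i.val + 1) % (2 * n)
    | .inl i, .inr k => i.val % 2 = k.val
    | .inr _, .inr _ => True
    | _, _ => False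

/-- The class `𝒲`: three wheels glued along a common triangle `V₀`, with no other edges. -/
def InClassW {V : Type*} (G : SimpleGraph V) : Prop :=
  ∃ P : V → Fin 4,
    (P ⁻¹' {0}).ncard = 3 ∧
    (∀ x y : V, P x = 0 → P y = 0 → x ≠ y → G.Adj x y) ∧
    (∀ i : Fin 4, i ≠ 0 → IsWheel (G.induce {v | P v = 0 ∨ P v = i})) ∧
    (∀ ⦃x y : V⦄, G.Adj x y → ∃ i : Fin 4, i ≠ 0 ∧ (P x = 0 ∨ P x = i) ∧ (P y = 0 ∨ P y = i))

/-- `EX₁`: `K₃,₃` plus a vertex joined to all of one colour class. -/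
def EX1 : SimpleGraph (Option (Fin 3 ⊕ Fin 3)) :=
  SimpleGraph.fromRel fun a b =>
    match a, b with
    | some (.inl _), some (.inr _) => True
    | none, some (.inl _) => True
    | _, _ => False

/-- `EX₂`: `K₅` plus a vertex joined to three of its vertices. -/
def EX2 : SimpleGraph (Option (Fin 5)) :=
  SimpleGraph.fromRel fun a b =>
    match a, b with
    | some i, some j => i ≠ j
    | none, some j => j.val < 3
    | _, _ => False

/-- `EX₈`: `K₃,₃` plus a vertex joined to two vertices of one class and one of the other. -/
def EX8 : SimpleGraph (Option (Fin 3 ⊕ Fin 3)) :=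
  SimpleGraph.fromRel fun a b =>
    match a, b with
    | some (.inl _), some (.inr _) => True
    | none, some x => x = Sum.inl 0 ∨ x = Sum.inl 1 ∨ x = Sum.inr 0
    | _, _ => False

/-- `K₅ʰ`: subdivide the edges `01` and `02` of `K₅` and join the two subdivision vertices. -/
def K5h : SimpleGraph (Fin 5 ⊕ Fin 2) :=
  SimpleGraph.fromRel fun a b =>
    match a, b with
    | .inl i, .inl j =>
        i ≠ j ∧ ¬(i = 0 ∧ j = 1) ∧ ¬(i = 1 ∧ j = 0) ∧ ¬(i = 0 ∧ j = 2) ∧ ¬(i = 2 ∧ j = 0)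
    | .inl i, .inr k => (k = 0 ∧ (i = 0 ∨ i = 1)) ∨ (k = 1 ∧ (i = 0 ∨ i = 2))
    | .inr _, .inr _ => True
    | _, _ => False

/-- `K₃,₃ʰ`: subdivide two edges of `K₃,₃` at a common endpoint and join
the two subdivision vertices. -/
def K33h : SimpleGraph ((Fin 3 ⊕ Fin 3) ⊕ Fin 2) :=
  SimpleGraph.fromRel fun a b =>
    match a, b with
    | .inl (.inl i), .inl (.inr j) => ¬(i = 0 ∧ (j = 0 ∨ j = 1))
    | .inl (.inr j), .inl (.inl i) => ¬(i = 0 ∧ (j = 0 ∨ j = 1))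
    | .inl x, .inr k =>
        (k = 0 ∧ (x = Sum.inl 0 ∨ x = Sum.inr 0)) ∨ (k = 1 ∧ (x = Sum.inl 0 ∨ x = Sum.inr 1))
    | .inr _, .inr _ => True
    | _, _ => False

/-- `K₅⁺`: `K₅` plus a pendant vertex. -/
def K5plus : SimpleGraph (Option (Fin 5)) :=
  SimpleGraph.fromRel fun a b =>
    match a, b with
    | some i, some j => i ≠ j
    | none, some j => j = 0
    | _, _ => False

/-- `K₃,₃⁺`: `K₃,₃` plus a pendant vertex. -/
def K33plus : SimpleGraph (Option (Fin 3 ⊕ Fin 3)) :=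
  SimpleGraph.fromRel fun a b =>
    match a, b with
    | some (.inl _), some (.inr _) => True
    | none, some x => x = Sum.inl 0
    | _, _ => False

/-- `K₅ ⊕ e`: disjoint union of `K₅` and one edge. -/
def K5oplus : SimpleGraph (Fin 5 ⊕ Fin 2) :=
  SimpleGraph.fromRel fun a b =>
    match a, b with
    | .inl i, .inl j => i ≠ j
    | .inr _, .inr _ => True
    | _, _ => False

/-- `K₃,₃ ⊕ e`: disjoint union of `K₃,₃` and one edge. -/
def K33oplus : SimpleGraph ((Fin 3 ⊕ Fin 3) ⊕ Fin 2) :=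
  SimpleGraph.fromRel fun a b =>
    match a, b with
    | .inl (.inl _), .inl (.inr _) => True
    | .inr _, .inr _ => True
    | _, _ => False

/-- The triad addition of `H` at `x y z`: add a new vertex joined to `x`, `y`, `z`. -/
def triadAddition {U : Type*} (H : SimpleGraph U) (x y z : U) : SimpleGraph (Option U) :=
  SimpleGraph.fromRel fun a b =>
    match a, b with
    | some u, some v => H.Adj u v
    | none, some u => u = x ∨ u = y ∨ u = z
    | _, _ => False

def IsTriadAdditionOf {V U : Type*} (G : SimpleGraph V) (H : SimpleGraph U) : Prop :=
  ∃ x y z : U, x ≠ y ∧ y ≠ z ∧ x ≠ z ∧ Nonempty (G ≃g triadAddition H x y z)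

/-- `G` is obtained from `H` by subdividing (possibly repeatedly) edges of `H`,
all of which lie in `S`. -/
def IsSubdivisionWithin {V W : Type*} (G : SimpleGraph V) (H : SimpleGraph W)
    (S : Set (Sym2 W)) : Prop :=
  ∃ (f : W ↪ V) (p : ∀ ⦃u v : W⦄, H.Adj u v → G.Walk (f u) (f v)),
    (∀ ⦃u v : W⦄ (h : H.Adj u v), (p h).IsPath) ∧
    (∀ ⦃u v : W⦄ (h : H.Adj u v), p h.symm = (p h).reverse) ∧
    (∀ ⦃u v : W⦄ (h : H.Adj u v), s(u, v) ∉ S → (p h).length = 1) ∧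
    (∀ ⦃u v : W⦄ (h : H.Adj u v) (w : W), f w ∈ (p h).support → w = u ∨ w = v) ∧
    (∀ ⦃u v u' v' : W⦄ (h : H.Adj u v) (h' : H.Adj u' v'), s(u, v) ≠ s(u', v') →
      ∀ x : V, x ∈ (p h).support → x ∈ (p h').support → x ∈ Set.range f) ∧
    (∀ x : V, x ∈ Set.range f ∨ ∃ (u v : W) (h : H.Adj u v), x ∈ (p h).support) ∧
    (∀ e ∈ G.edgeSet, ∃ (u v : W) (h : H.Adj u v), e ∈ (p h).edges)

/-- `G` is a subdivision of `H`. -/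
def IsSubdivision {V W : Type*} (G : SimpleGraph V) (H : SimpleGraph W) : Prop :=
  IsSubdivisionWithin G H Set.univ

/-- `D(H)`: the set of edges of `H` whose deletion leaves a planar graph. -/
def Dset {U : Type*} (H : SimpleGraph U) : Set (Sym2 U) :=
  {e | e ∈ H.edgeSet ∧ Planar (H.deleteEdges {e})}

/-- `G[A]` together with all edges between vertices of `T` (`T ⊆ A` intended). -/
def deltaGraph {V : Type*} (G : SimpleGraph V) (A T : Set V) : SimpleGraph A :=
  SimpleGraph.fromRel fun a b => G.Adj a.1 b.1 ∨ (a.1 ∈ T ∧ b.1 ∈ T)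

/-- `G[A]^Y` for the separation `{G[A], G[B]}`: add a new vertex joined to `A ∩ B`. -/
def sepY {V : Type*} (G : SimpleGraph V) (A B : Set V) : SimpleGraph (Option A) :=
  SimpleGraph.fromRel fun x y =>
    match x, y with
    | some a, some b => G.Adj a.1 b.1
    | none, some a => a.1 ∈ A ∩ B
    | _, _ => False

/-- `G₂` is obtained from `G` by adding isolated vertices. -/
def AddIsolated {V₂ V : Type*} (G₂ : SimpleGraph V₂) (G : SimpleGraph V) : Prop :=
  ∃ f : V ↪ V₂, (∀ a b : V, G₂.Adj (f a) (f b) ↔ G.Adj a b) ∧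
    ∀ x : V₂, x ∉ Set.range f → ∀ y : V₂, ¬ G₂.Adj x y

/-- The set of non-isolated vertices of `G` (so `G* = G.induce (core G)`). -/
def core {V : Type*} (G : SimpleGraph V) : Set V := {v | ∃ w, G.Adj v w}

/-- `G` is obtained from `G'` by 3-summing wheels onto distinct triangles of `G'`. -/
def SumWheelsOnto {V U : Type*} (G : SimpleGraph V) (G' : SimpleGraph U) : Prop :=
  ∃ (g : U ↪ V) (k : ℕ) (Wp : Fin k → Set V) (T : Fin k → Set U),
    (∀ i, (T i).ncard = 3) ∧
    (∀ i, ∀ x ∈ T i, ∀ y ∈ T i, x ≠ y → G'.Adj x y) ∧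
    Function.Injective T ∧
    (∀ i, Disjoint (Wp i) (Set.range ⇑g)) ∧
    (Pairwise fun i j => Disjoint (Wp i) (Wp j)) ∧
    (Set.range ⇑g ∪ ⋃ i, Wp i) = Set.univ ∧
    (∀ i, IsWheel (deltaGraph G (Wp i ∪ ⇑g '' T i) (⇑g '' T i))) ∧
    (∀ a b : U, G.Adj (g a) (g b) → G'.Adj a b) ∧
    (∀ a b : U, G'.Adj a b → (G.Adj (g a) (g b) ∨ ∃ i, a ∈ T i ∧ b ∈ T i)) ∧
    (∀ ⦃x y : V⦄, G.Adj x y → (x ∈ Set.range ⇑g ∧ y ∈ Set.range ⇑g) ∨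
      ∃ i, x ∈ Wp i ∪ ⇑g '' T i ∧ y ∈ Wp i ∪ ⇑g '' T i) ∧
    (∀ i, ∀ x ∈ Wp i, ∀ ⦃y : V⦄, G.Adj x y → y ∈ Wp i ∪ ⇑g '' T i)

/-- `H` has an edge whose deletion and contraction are both nonplanar. -/
def HasBadEdge {V : Type*} (H : SimpleGraph V) : Prop :=
  ∃ u v : V, H.Adj u v ∧ ¬ Planar (H.deleteEdges {s(u, v)}) ∧ ¬ Planar (contractEdge H u v)

/-
Planarity comes from van Kampen's obstruction: a graph drawn so that any two disjoint edges cross an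
even number of times has neither a `K₅` nor a `K₃,₃` minor. Two-page drawings, given combinatorially
by a linear order of the vertices, have this property. Deleting a cycle edge of `M_n` or `DW_n`, or
contracting any other edge, leaves a graph with such a drawing. In a graph of `𝒲`, once the rim of
one wheel is cut, that wheel can be dismantled by removing vertices of degree two with adjacent
neighbours, and the other two wheels together have such a drawing. Finally, an edge `e` of a minor
comes from an edge `f` of the graph, and deleting or contracting `e` gives a minor of the graph
obtained by deleting or contracting `f`.
-/

section Connectivity

variable {V V' : Type*} {G : SimpleGraph V} {G' : SimpleGraph V'}

/-- A weak homomorphism: every edge is mapped to an edge or to a single vertex, as under a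
contraction. -/
def IsWeakHom (G : SimpleGraph V) (G' : SimpleGraph V') (f : V → V') : Prop :=
  ∀ ⦃y z : V⦄, G.Adj y z → f y = f z ∨ G'.Adj (f y) (f z)

theorem IsWeakHom.connected_induce_image {f : V → V'} (hf : IsWeakHom G G' f) {S : Set V}
    (hS : (G.induce S).Connected) : (G'.induce (f '' S)).Connected := by
  obtain ⟨r⟩ := hS.nonempty
  refine connected_iff_exists_forall_reachable _ |>.2
    ⟨⟨f r, Set.mem_image_of_mem f r.2⟩, ?_⟩
  rintro ⟨_, v, hv, rfl⟩
  have hrv := (reachable_iff_reflTransGen _ _).1 (hS.preconnected r ⟨v, hv⟩)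
  refine (reachable_iff_reflTransGen _ _).2 <|
    hrv.lift' (fun y : S => (⟨f y, Set.mem_image_of_mem f y.2⟩ : f '' S)) fun y z hyz => ?_
  rcases hf hyz with (heq : f y = f z) | hadj
  · simpa only [Function.onFun, heq] using .refl
  · exact .single hadj

theorem connected_induce_biUnion {S : Set V} {C : V → Set V'} (hS : (G.induce S).Connected)
    (hC : ∀ v ∈ S, (G'.induce (C v)).Connected)
    (hadj : ∀ v ∈ S, ∀ w ∈ S, G.Adj v w → ∃ y ∈ C v, ∃ z ∈ C w, G'.Adj y z) :
    (G'.induce (⋃ v ∈ S, C v)).Connected := by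
  obtain ⟨r⟩ := hS.nonempty
  have hsub : ∀ v ∈ S, C v ⊆ ⋃ v ∈ S, C v := fun v hv => Set.subset_biUnion_of_mem hv
  have hwithin : ∀ (v : S) (y z) (hy : y ∈ C v) (hz : z ∈ C v),
      (G'.induce (⋃ v ∈ S, C v)).Reachable ⟨y, hsub v v.2 hy⟩ ⟨z, hsub v v.2 hz⟩ :=
    fun v y z hy hz => ((hC v v.2).preconnected ⟨y, hy⟩ ⟨z, hz⟩).map
      (induceHomOfLE G' (hsub v v.2)).toHom
  obtain ⟨⟨c, hc⟩⟩ := (hC r r.2).nonempty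
  refine connected_iff_exists_forall_reachable _ |>.2 ⟨⟨c, hsub r r.2 hc⟩, ?_⟩
  suffices ∀ v : S, ∀ z (hz : z ∈ C v),
      (G'.induce (⋃ v ∈ S, C v)).Reachable ⟨c, hsub r r.2 hc⟩ ⟨z, hsub v v.2 hz⟩ by
    rintro ⟨z, hz⟩
    obtain ⟨v, hv, hzv⟩ := Set.mem_iUnion₂.1 hz
    exact this ⟨v, hv⟩ z hzv
  intro v
  induction (reachable_iff_reflTransGen _ _).1 (hS.preconnected r v) with
  | refl => exact fun z hz => hwithin r c z hc hz
  | tail _ hab ih =>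
    intro z hz
    obtain ⟨y, hy, y', hy', hyy'⟩ := hadj _ (Subtype.prop _) _ (Subtype.prop _) hab
    have hstep : (G'.induce (⋃ v ∈ S, C v)).Adj ⟨y, hsub _ (Subtype.prop _) hy⟩
        ⟨y', hsub _ (Subtype.prop _) hy'⟩ := hyy'
    exact ((ih y hy).trans hstep.reachable).trans (hwithin _ y' z hy' hz)

theorem connected_induce_of_descent {S : Set V} {r : V} (hr : r ∈ S) (c : V → ℕ)
    (hdesc : ∀ v ∈ S, v ≠ r → ∃ w ∈ S, c w < c v ∧ G.Adj v w) : (G.induce S).Connected := by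
  refine connected_iff_exists_forall_reachable _ |>.2 ⟨⟨r, hr⟩, ?_⟩
  rintro ⟨v, hv⟩
  induction hk : c v using Nat.strong_induction_on generalizing v with
  | _ k ih =>
    rcases eq_or_ne v r with rfl | hne
    · exact .refl _
    · obtain ⟨w, hw, hlt, hadj⟩ := hdesc v hv hne
      exact (ih _ (hk ▸ hlt) w hw rfl).trans (Adj.reachable (G := G.induce S) hadj.symm)

end Connectivity

section Minors

variable {U V V' W : Type*} {H : SimpleGraph W} {G : SimpleGraph V} {G' : SimpleGraph V'}
  {K : SimpleGraph U} {B : W → Set V}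

/-- The branch sets `B` exhibit `H` as a minor of `G`. Nonemptiness is part of connectedness. -/
structure IsMinorModel (H : SimpleGraph W) (G : SimpleGraph V) (B : W → Set V) : Prop where
  connected : ∀ w, (G.induce (B w)).Connected
  disjoint : Pairwise fun w₁ w₂ => Disjoint (B w₁) (B w₂)
  exists_adj : ∀ ⦃w₁ w₂ : W⦄, H.Adj w₁ w₂ → ∃ v₁ ∈ B w₁, ∃ v₂ ∈ B w₂, G.Adj v₁ v₂

theorem isMinor_iff : IsMinor H G ↔ ∃ B, IsMinorModel H G B :=
  ⟨fun ⟨B, _, hconn, hdisj, hadj⟩ => ⟨B, hconn, hdisj, hadj⟩,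
    fun ⟨B, hB⟩ => ⟨B, fun w => Set.nonempty_coe_sort.1 (hB.connected w).nonempty,
      hB.connected, hB.disjoint, hB.exists_adj⟩⟩

theorem IsMinorModel.isMinor (hB : IsMinorModel H G B) : IsMinor H G :=
  isMinor_iff.2 ⟨B, hB⟩

theorem IsMinorModel.eq_of_mem (hB : IsMinorModel H G B) {v : V} {w₁ w₂ : W}
    (h₁ : v ∈ B w₁) (h₂ : v ∈ B w₂) : w₁ = w₂ :=
  by_contra fun hne => Set.disjoint_left.1 (hB.disjoint hne) h₁ h₂

theorem IsMinorModel.image (hB : IsMinorModel H G B) {σ : V → V'} (hσ : IsWeakHom G G' σ)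
    (hdisj : Pairwise fun w₁ w₂ => Disjoint (σ '' B w₁) (σ '' B w₂)) :
    IsMinorModel H G' fun w => σ '' B w where
  connected w := hσ.connected_induce_image (hB.connected w)
  disjoint := hdisj
  exists_adj w₁ w₂ h := by
    obtain ⟨y, hy, z, hz, hyz⟩ := hB.exists_adj h
    have hmem := Set.mem_image_of_mem σ hy
    refine ⟨σ y, hmem, σ z, Set.mem_image_of_mem σ hz, (hσ hyz).resolve_left fun heq => ?_⟩
    exact Set.disjoint_left.1 (hdisj h.ne) hmem (heq ▸ Set.mem_image_of_mem σ hz)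

theorem isMinor_of_isContained (h : H ⊑ G) : IsMinor H G := by
  obtain ⟨f⟩ := h
  refine IsMinorModel.isMinor (B := fun w => {f w}) ⟨fun w => ?_, fun w₁ w₂ hne => ?_,
    fun w₁ w₂ hadj => ⟨_, rfl, _, rfl, f.toHom.map_adj hadj⟩⟩
  · exact .of_subsingleton
  · exact Set.disjoint_singleton.2 (f.injective.ne hne)

theorem isMinor_of_descent (col : V → W) (r : W → V) (c : V → ℕ) (hr : ∀ w, col (r w) = w)
    (hdesc : ∀ v, v ≠ r (col v) → ∃ w, col w = col v ∧ c w < c v ∧ G.Adj v w)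
    (hadj : ∀ w₁ w₂, H.Adj w₁ w₂ → ∃ v₁ v₂, col v₁ = w₁ ∧ col v₂ = w₂ ∧ G.Adj v₁ v₂) :
    IsMinor H G := by
  refine IsMinorModel.isMinor (B := fun w => col ⁻¹' {w}) ⟨fun w => ?_, fun w₁ w₂ hne => ?_,
    fun w₁ w₂ h => ?_⟩
  · refine connected_induce_of_descent (hr w) c ?_
    rintro v rfl hv
    exact hdesc v hv
  · exact (Set.disjoint_singleton.2 hne).preimage col
  · obtain ⟨v₁, v₂, h₁, h₂, h⟩ := hadj w₁ w₂ h
    exact ⟨v₁, h₁, v₂, h₂, h⟩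

theorem isMinor_K5_of_descent (col : V → Fin 5) (r : Fin 5 → V) (c : V → ℕ)
    (hr : ∀ w, col (r w) = w)
    (hdesc : ∀ v, v ≠ r (col v) → ∃ w, col w = col v ∧ c w < c v ∧ G.Adj v w)
    (hadj : ∀ w₁ w₂, w₁ < w₂ → ∃ v₁ v₂, col v₁ = w₁ ∧ col v₂ = w₂ ∧ G.Adj v₁ v₂) :
    IsMinor K5 G := by
  refine isMinor_of_descent col r c hr hdesc fun w₁ w₂ h => ?_
  rcases h.ne.lt_or_gt with hlt | hlt
  · exact hadj w₁ w₂ hlt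
  · obtain ⟨v₁, v₂, h₁, h₂, hv⟩ := hadj w₂ w₁ hlt
    exact ⟨v₂, v₁, h₂, h₁, hv.symm⟩

theorem isMinor_K33_of_descent (col : V → Fin 3 ⊕ Fin 3) (r : Fin 3 ⊕ Fin 3 → V) (c : V → ℕ)
    (hr : ∀ w, col (r w) = w)
    (hdesc : ∀ v, v ≠ r (col v) → ∃ w, col w = col v ∧ c w < c v ∧ G.Adj v w)
    (hadj : ∀ i j, ∃ v₁ v₂, col v₁ = .inl i ∧ col v₂ = .inr j ∧ G.Adj v₁ v₂) :
    IsMinor K33 G := by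
  refine isMinor_of_descent col r c hr hdesc ?_
  rintro (i | i) (j | j) h
  · simp [K33] at h
  · exact hadj i j
  · obtain ⟨v₁, v₂, h₁, h₂, hv⟩ := hadj j i
    exact ⟨v₂, v₁, h₂, h₁, hv.symm⟩
  · simp [K33] at h

theorem IsMinor.trans (hHG : IsMinor H G) (hGK : IsMinor G K) : IsMinor H K := by
  obtain ⟨B, hB⟩ := isMinor_iff.1 hHG
  obtain ⟨C, hC⟩ := isMinor_iff.1 hGK
  refine IsMinorModel.isMinor (B := fun w => ⋃ v ∈ B w, C v) ⟨fun w => ?_, fun w₁ w₂ hne => ?_,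
    fun w₁ w₂ hadj => ?_⟩
  · exact connected_induce_biUnion (hB.connected w) (fun v _ => hC.connected v)
      fun _ _ _ _ h => hC.exists_adj h
  · simp only [Set.disjoint_iUnion_left, Set.disjoint_iUnion_right]
    exact fun y hy z hz =>
      hC.disjoint fun h => hne (hB.eq_of_mem hz (h ▸ hy))
  · obtain ⟨y, hy, z, hz, hyz⟩ := hB.exists_adj hadj
    obtain ⟨y', hy', z', hz', h⟩ := hC.exists_adj hyz
    exact ⟨y', Set.mem_biUnion hy hy', z', Set.mem_biUnion hz hz', h⟩

theorem Planar.of_isMinor (hK : Planar K) (h : IsMinor G K) : Planar G :=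
  ⟨fun h5 => hK.1 (h5.trans h), fun h33 => hK.2 (h33.trans h)⟩

theorem Planar.mono {D : SimpleGraph V} (hG : Planar G) (h : D ≤ G) : Planar D :=
  hG.of_isMinor (isMinor_of_isContained (.of_le h))

end Minors

section Contraction

variable {V W : Type*} {G : SimpleGraph V} {H : SimpleGraph W} {B : V → Set W} {u v : V}
  {a b : W}

theorem contractEdge_adj {x y : V} :
    (contractEdge G u v).Adj x y ↔ x ≠ y ∧ x ≠ v ∧ y ≠ v ∧
      (G.Adj x y ∨ (x = u ∧ G.Adj v y) ∨ (y = u ∧ G.Adj x v)) := by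
  have := G.adj_comm
  simp only [contractEdge, SimpleGraph.fromRel_adj]
  grind

theorem isWeakHom_contractEdge [DecidableEq V] (huv : u ≠ v) :
    IsWeakHom G (contractEdge G u v) fun y => if y = v then u else y := by
  intro y z hyz
  have := hyz.symm
  simp only [contractEdge_adj]
  grind

theorem contractEdge_isContained_swap (u v : V) : contractEdge G u v ⊑ contractEdge G v u := by
  classical
  rcases eq_or_ne u v with rfl | huv
  · exact .rfl
  refine ⟨Hom.toCopy ⟨Equiv.swap u v, fun {x y} hxy => ?_⟩ (Equiv.swap u v).injective⟩
  have := G.adj_comm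
  rw [contractEdge_adj] at hxy ⊢
  simp only [Equiv.swap_apply_def]
  grind

theorem planar_deleteEdges_or_contractEdge_symm
    (h : Planar (G.deleteEdges {s(u, v)}) ∨ Planar (contractEdge G u v)) :
    Planar (G.deleteEdges {s(v, u)}) ∨ Planar (contractEdge G v u) :=
  h.imp (Sym2.eq_swap (a := u) (b := v) ▸ ·)
    (·.of_isMinor (isMinor_of_isContained (contractEdge_isContained_swap v u)))

theorem contractEdge_le_deleteEdges (h : ∀ x, G.Adj v x → x ≠ u → G.Adj u x) (w : V) :
    contractEdge G u v ≤ G.deleteEdges {s(v, w)} := by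
  intro x y hxy
  have := G.adj_comm
  rw [contractEdge_adj] at hxy
  simp only [deleteEdges_adj, Set.mem_singleton_iff, Sym2.eq_iff]
  grind

theorem IsMinorModel.deleteEdges (hB : IsMinorModel G H B) (huv : G.Adj u v) (ha : a ∈ B u)
    (hb : b ∈ B v) : IsMinorModel (G.deleteEdges {s(u, v)}) (H.deleteEdges {s(a, b)}) B where
  connected w := by
    have hinduce : (H.deleteEdges {s(a, b)}).induce (B w) = H.induce (B w) := by
      ext ⟨y, hy⟩ ⟨z, hz⟩
      have hay : y = a → z ≠ b := fun h h' =>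
        huv.ne ((hB.eq_of_mem ha (h ▸ hy)).trans (hB.eq_of_mem (h' ▸ hz) hb))
      have hby : y = b → z ≠ a := fun h h' =>
        huv.ne ((hB.eq_of_mem ha (h' ▸ hz)).trans (hB.eq_of_mem (h ▸ hy) hb))
      simp only [comap_adj, deleteEdges_adj, Function.Embedding.subtype_apply,
        Set.mem_singleton_iff, Sym2.eq_iff]
      tauto
    exact hinduce ▸ hB.connected w
  disjoint := hB.disjoint
  exists_adj w₁ w₂ h := by
    obtain ⟨hadj, hne⟩ := (deleteEdges_adj ..).1 h
    obtain ⟨y, hy, z, hz, hyz⟩ := hB.exists_adj hadj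
    refine ⟨y, hy, z, hz, (deleteEdges_adj ..).2 ⟨hyz, fun heq => hne ?_⟩⟩
    have hmem := fun {w w' : V} {x} => hB.eq_of_mem (v := x) (w₁ := w) (w₂ := w')
    simp only [Set.mem_singleton_iff, Sym2.eq_iff] at heq ⊢
    grind

/-- The branch sets obtained from `B` by adding `B v` to `B u`; away from the index `v` they exhibit
`G / uv` as a minor. -/
def mergeBranch (B : V → Set W) (u v w : V) : Set W := {y | y ∈ B w ∨ w = u ∧ y ∈ B v}

theorem mem_mergeBranch {w : V} {y : W} :
    y ∈ mergeBranch B u v w ↔ y ∈ B w ∨ w = u ∧ y ∈ B v := Iff.rfl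

theorem IsMinorModel.connected_mergeBranch (hB : IsMinorModel G H B) (ha : a ∈ B u)
    (hb : b ∈ B v) (hab : H.Adj a b) (w : V) : (H.induce (mergeBranch B u v w)).Connected := by
  by_cases hw : w = u
  · have hmerge : mergeBranch B u v w = B u ∪ B v := by ext; simp [mem_mergeBranch, hw]
    exact hmerge ▸ connected_induce_union (hB.connected u).preconnected
      (hB.connected v).preconnected ha hb hab
  · have hmerge : mergeBranch B u v w = B w := by ext; simp [mem_mergeBranch, hw]
    exact hmerge ▸ hB.connected w

theorem IsMinorModel.exists_adj_mergeBranch (hB : IsMinorModel G H B) {w₁ w₂ : V}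
    (h : (contractEdge G u v).Adj w₁ w₂) :
    ∃ y ∈ mergeBranch B u v w₁, ∃ z ∈ mergeBranch B u v w₂, H.Adj y z := by
  rcases (contractEdge_adj.1 h).2.2.2 with h | ⟨hu, h⟩ | ⟨hu, h⟩ <;>
    obtain ⟨y, hy, z, hz, hyz⟩ := hB.exists_adj h <;>
    exact ⟨y, by grind [mem_mergeBranch], z, by grind [mem_mergeBranch], hyz⟩

theorem IsMinorModel.disjoint_mergeBranch (hB : IsMinorModel G H B) {w₁ w₂ : V} (h₁ : w₁ ≠ v)
    (h₂ : w₂ ≠ v) (hne : w₁ ≠ w₂) : Disjoint (mergeBranch B u v w₁) (mergeBranch B u v w₂) := by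
  refine Set.disjoint_left.2 fun y hy₁ hy₂ => ?_
  have heq : ∀ w w', y ∈ B w → y ∈ B w' → w = w' := fun _ _ => hB.eq_of_mem
  simp only [mem_mergeBranch] at hy₁ hy₂
  grind

theorem IsMinorModel.isMinor_contractEdge (hB : IsMinorModel G H B) (ha : a ∈ B u)
    (hb : b ∈ B v) (hab : H.Adj a b) :
    IsMinor (contractEdge G u v) (contractEdge H a b) := by
  classical
  let σ : W → W := fun y => if y = b then a else y
  have hσ : IsWeakHom H (contractEdge H a b) σ := isWeakHom_contractEdge hab.ne
  let C : V → Set W := fun w => if w = v then {b} else mergeBranch B u v w \ {b}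
  have hC : ∀ w ≠ v, C w = σ '' mergeBranch B u v w := by
    intro w hw
    have := hab.ne
    have : b ∈ B w → w = v := fun h => hB.eq_of_mem h hb
    ext y
    simp only [C, if_neg hw, Set.mem_image, σ, Set.mem_sdiff, mem_mergeBranch]
    grind
  have hdisj : Pairwise fun w₁ w₂ => Disjoint (C w₁) (C w₂) := by
    intro w₁ w₂ hne
    have := fun h₁ h₂ => Set.disjoint_left.1 (hB.disjoint_mergeBranch (u := u) (v := v) h₁ h₂ hne)
    refine Set.disjoint_left.2 fun y hy₁ hy₂ => ?_
    grind
  refine IsMinorModel.isMinor (B := C) ⟨fun w => ?_, hdisj, fun w₁ w₂ h => ?_⟩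
  · by_cases hw : w = v
    · have hCw : C w = {b} := if_pos hw
      exact hCw ▸ .of_subsingleton
    · exact hC w hw ▸ hσ.connected_induce_image (hB.connected_mergeBranch ha hb hab w)
  · obtain ⟨hne, h₁, h₂, -⟩ := contractEdge_adj.1 h
    obtain ⟨y, hy, z, hz, hyz⟩ := hB.exists_adj_mergeBranch h
    have hy' : σ y ∈ C w₁ := hC w₁ h₁ ▸ Set.mem_image_of_mem σ hy
    have hz' : σ z ∈ C w₂ := hC w₂ h₂ ▸ Set.mem_image_of_mem σ hz
    exact ⟨σ y, hy', σ z, hz', (hσ hyz).resolve_left fun heq =>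
      Set.disjoint_left.1 (hdisj hne) hy' (heq ▸ hz')⟩

theorem AlmostPlanar.of_isMinor (hH : AlmostPlanar H) (hGH : IsMinor G H) (hG : ¬ Planar G) :
    AlmostPlanar G := by
  obtain ⟨B, hB⟩ := isMinor_iff.1 hGH
  refine ⟨hG, fun u v huv => ?_⟩
  obtain ⟨a, ha, b, hb, hab⟩ := hB.exists_adj huv
  exact (hH.2 hab).imp (·.of_isMinor (hB.deleteEdges huv ha hb).isMinor)
    (·.of_isMinor (hB.isMinor_contractEdge ha hb hab))

end Contraction

section EvenDrawing

variable {V W : Type*} {G : SimpleGraph V} {H : SimpleGraph W}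

/-- A certificate that `G` can be drawn so that independent edges cross evenly, as in the
van Kampen obstruction modulo two. Place the vertices in convex position, in an order in which
`side a b` tells whether `a` comes before `b`, draw the edges straight, and then pull the edge `ab`
over the vertex `c` a number of times of parity `move c a b`. The edges `ab` and `cd` cross
initially iff the right-hand side of `even` is `1`, and the left-hand side counts the crossings
created. -/
structure EvenDrawing (G : SimpleGraph V) where
  side : V → V → ZMod 2
  move : V → V → V → ZMod 2
  side_add_swap : ∀ ⦃a b⦄, a ≠ b → side a b + side b a = 1
  even : ∀ ⦃a b c d⦄, G.Adj a b → G.Adj c d → a ≠ c → a ≠ d → b ≠ c → b ≠ d →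
    move c a b + move d a b + move a c d + move b c d = side a c + side a d + side b c + side b d

/-- The sum of `g` along the darts of a walk. -/
def walkSum (g : V → V → ZMod 2) {u v : V} (p : G.Walk u v) : ZMod 2 :=
  (p.darts.map fun d => g d.fst d.snd).sum

theorem walkSum_nil (g : V → V → ZMod 2) (u : V) : walkSum g (.nil : G.Walk u u) = 0 := rfl

theorem walkSum_cons (g : V → V → ZMod 2) {u v w : V} (h : G.Adj u v) (p : G.Walk v w) :
    walkSum g (.cons h p) = g u v + walkSum g p := by
  simp [walkSum]

namespace EvenDrawing

theorem edge_walk (D : EvenDrawing G) {s t u v : V} (hst : G.Adj s t) (q : G.Walk u v)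
    (hs : s ∉ q.support) (ht : t ∉ q.support) :
    D.move u s t + D.move v s t + walkSum (D.move s) q + walkSum (D.move t) q =
      D.side s u + D.side s v + D.side t u + D.side t v := by
  induction q with
  | nil => grind [walkSum_nil]
  | cons huv q ih =>
    simp only [Walk.support_cons, List.mem_cons, not_or] at hs ht
    have hedge := D.even hst huv hs.1 (fun h => hs.2 (h ▸ q.start_mem_support))
      ht.1 (fun h => ht.2 (h ▸ q.start_mem_support))
    grind [walkSum_cons]

theorem walk_walk (D : EvenDrawing G) {s t u v : V} (p : G.Walk s t) (q : G.Walk u v)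
    (h : p.support.Disjoint q.support) :
    walkSum (D.move u) p + walkSum (D.move v) p + walkSum (D.move s) q + walkSum (D.move t) q =
      D.side s u + D.side s v + D.side t u + D.side t v := by
  induction p with
  | nil => grind [walkSum_nil]
  | cons hst p ih =>
    rw [Walk.support_cons, List.disjoint_cons_left] at h
    have hedge := D.edge_walk hst q h.1 (h.2 p.start_mem_support)
    have := ih h.2
    grind [walkSum_cons]

theorem four_clique (D : EvenDrawing G) {a b c d : V} (hab : G.Adj a b) (hac : G.Adj a c)
    (had : G.Adj a d) (hbc : G.Adj b c) (hbd : G.Adj b d) (hcd : G.Adj c d) :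
    (D.move a b c + D.move b a c + D.move c a b) + (D.move a b d + D.move b a d + D.move d a b) +
      (D.move a c d + D.move c a d + D.move d a c) +
      (D.move b c d + D.move c b d + D.move d b c) = 1 := by
  have h₁ := D.even hab hcd hac.ne had.ne hbc.ne hbd.ne
  have h₂ := D.even hac hbd hab.ne had.ne hbc.ne' hcd.ne
  have h₃ := D.even had hbc hab.ne hac.ne hbd.ne' hcd.ne'
  have := D.side_add_swap hbc.ne
  have := D.side_add_swap hbd.ne
  have := D.side_add_swap hcd.ne
  grind

theorem four_cycle (D : EvenDrawing G) {a b c d : V} (hac : G.Adj a c) (had : G.Adj a d)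
    (hbc : G.Adj b c) (hbd : G.Adj b d) (hab : a ≠ b) (hcd : c ≠ d) :
    (D.move a b c + D.move b a c) + (D.move a b d + D.move b a d) +
      (D.move c a d + D.move d a c) + (D.move c b d + D.move d b c) =
      1 + (D.side a c + D.side a d + D.side b c + D.side b d) := by
  have h₁ := D.even hac hbd hab had.ne hbc.ne' hcd
  have h₂ := D.even had hbc hab hac.ne hbd.ne' hcd.symm
  have := D.side_add_swap hbc.ne
  have := D.side_add_swap hbd.ne
  have := D.side_add_swap hcd
  grind

theorem not_K5 (D : EvenDrawing K5) : False := by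
  have hK4 : ∀ a b c d : Fin 5, a < b → b < c → c < d → _ := fun a b c d hab hbc hcd =>
    D.four_clique (a := a) (b := b) (c := c) (d := d) hab.ne (hab.trans hbc).ne
      (hab.trans (hbc.trans hcd)).ne hbc.ne (hbc.trans hcd).ne hcd.ne
  have h₀ := hK4 1 2 3 4 (by decide) (by decide) (by decide)
  have h₁ := hK4 0 2 3 4 (by decide) (by decide) (by decide)
  have h₂ := hK4 0 1 3 4 (by decide) (by decide) (by decide)
  have h₃ := hK4 0 1 2 4 (by decide) (by decide) (by decide)
  have h₄ := hK4 0 1 2 3 (by decide) (by decide) (by decide)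
  grind

theorem not_K33 (D : EvenDrawing K33) : False := by
  have hK22 := fun (a b c d : Fin 3) => D.four_cycle (a := .inl a) (b := .inl b)
    (c := .inr c) (d := .inr d) (by simp [K33]) (by simp [K33]) (by simp [K33]) (by simp [K33])
  simp only [ne_eq, Sum.inl.injEq, Sum.inr.injEq] at hK22
  have hpair : ∀ a b : Fin 3, a ≠ b → _ := fun a b h =>
    congrArg₂ (· + ·) (congrArg₂ (· + ·) (hK22 a b 0 1 h (by decide)) (hK22 a b 0 2 h (by decide)))
      (hK22 a b 1 2 h (by decide))
  have h₂ := hpair 0 1 (by decide)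
  have h₁ := hpair 0 2 (by decide)
  have h₀ := hpair 1 2 (by decide)
  grind

end EvenDrawing

theorem IsMinorModel.exists_walk {B : W → Set V} (hB : IsMinorModel H G B) {r : W → V}
    (hr : ∀ w, r w ∈ B w) {w₁ w₂ : W} (h : H.Adj w₁ w₂) :
    ∃ p : G.Walk (r w₁) (r w₂), ∀ y ∈ p.support, y ∈ B w₁ ∪ B w₂ := by
  obtain ⟨y, hy, z, hz, hyz⟩ := hB.exists_adj h
  have hconn := connected_induce_union (hB.connected w₁).preconnected
    (hB.connected w₂).preconnected hy hz hyz
  obtain ⟨p⟩ := hconn.preconnected ⟨r w₁, .inl (hr w₁)⟩ ⟨r w₂, .inr (hr w₂)⟩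
  refine ⟨p.map (Embedding.induce _).toHom, fun y hy => ?_⟩
  obtain ⟨x, -, rfl⟩ := List.mem_map.1 (Walk.support_map _ p ▸ hy)
  exact x.2

theorem EvenDrawing.nonempty_of_isMinor (D : EvenDrawing G) (h : IsMinor H G) :
    Nonempty (EvenDrawing H) := by
  classical
  obtain ⟨B, hB⟩ := isMinor_iff.1 h
  choose r hr using fun w => Set.nonempty_coe_sort.1 (hB.connected w).nonempty
  choose p hp using fun w₁ w₂ (h : H.Adj w₁ w₂) => hB.exists_walk hr h
  have hne : ∀ {w₁ w₂}, w₁ ≠ w₂ → r w₁ ≠ r w₂ := fun hne heq =>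
    hne (hB.eq_of_mem (hr _) (heq ▸ hr _))
  refine ⟨⟨fun a b => D.side (r a) (r b),
    fun c a b => if h : H.Adj a b then walkSum (D.move (r c)) (p a b h) else 0,
    fun a b h => D.side_add_swap (hne h), fun a b c d hab hcd hac had hbc hbd => ?_⟩⟩
  simp only [dif_pos hab, dif_pos hcd]
  refine D.walk_walk _ _ fun y hy hy' => ?_
  rcases hp a b hab y hy with h₁ | h₁ <;> rcases hp c d hcd y hy' with h₂ | h₂ <;>
    have := hB.eq_of_mem h₁ h₂ <;> contradiction

theorem EvenDrawing.planar (D : EvenDrawing G) : Planar G :=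
  ⟨fun h => (D.nonempty_of_isMinor h).elim not_K5, fun h => (D.nonempty_of_isMinor h).elim not_K33⟩

end EvenDrawing

section TwoPage

variable {V α : Type*} [LinearOrder α] {G : SimpleGraph V} {f : V → α}

theorem planar_of_twoPage (hf : Function.Injective f) (A : Set (Sym2 V))
    (hA : ∀ ⦃a b c d⦄, G.Adj a b → G.Adj c d → f a < f c → f c < f b → f b < f d →
      (s(a, b) ∈ A ↔ s(c, d) ∉ A)) : Planar G := by
  classical
  let L : V → V → ZMod 2 := fun a b => if f a < f b then 1 else 0
  have hL : ∀ ⦃a b⦄, a ≠ b → L a b + L b a = 1 := by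
    intro a b hab
    rcases (hf.ne hab).lt_or_gt with h | h <;> simp [L, h, h.not_gt]
  have hcross : ∀ ⦃a b c d⦄, G.Adj a b → G.Adj c d → a ≠ c → a ≠ d → b ≠ c → b ≠ d →
      L a c + L a d + L b c + L b d ≠ 0 → (s(a, b) ∈ A ↔ s(c, d) ∉ A) := by
    intro a b c d hab hcd hac had hbc hbd
    have h₁ := @hA a b c d hab hcd
    have h₂ := @hA b a c d hab.symm hcd
    have h₃ := @hA a b d c hab hcd.symm
    have h₄ := @hA b a d c hab.symm hcd.symm
    have h₅ := @hA c d a b hcd hab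
    have h₆ := @hA d c a b hcd.symm hab
    have h₇ := @hA c d b a hcd hab.symm
    have h₈ := @hA d c b a hcd.symm hab.symm
    have := hf.ne hac
    have := hf.ne had
    have := hf.ne hbc
    have := hf.ne hbd
    simp only [Sym2.eq_swap (a := b) (b := a), Sym2.eq_swap (a := d) (b := c)] at *
    grind
  refine EvenDrawing.planar ⟨L, fun c a b => if s(a, b) ∈ A then L a c + L b c else 0, hL, ?_⟩
  intro a b c d hab hcd hac had hbc hbd
  have := hcross hab hcd hac had hbc hbd
  have := hL hac
  have := hL had
  have := hL hbc
  have := hL hbd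
  grind

theorem planar_of_apex (z : V) (hf : Set.InjOn f {z}ᶜ)
    (h : ∀ ⦃a b c d⦄, a ≠ z → b ≠ z → c ≠ z → d ≠ z → G.Adj a b → G.Adj c d →
      f a < f c → f c < f b → ¬ f b < f d) : Planar G := by
  classical
  let k : V → ℕ := fun v => if v = z then 0 else 1
  have hlt : ∀ {a b}, toLex (k a, f a) < toLex (k b, f b) ↔ k a < k b ∨ k a = k b ∧ f a < f b :=
    Prod.Lex.toLex_lt_toLex
  refine planar_of_twoPage (f := fun v => toLex (k v, f v)) (fun a b hab => ?_) {e | z ∈ e} ?_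
  · have hab : k a = k b ∧ f a = f b := by simpa using hab
    have := fun ha => @hf a ha b
    grind
  · intro a b c d hab hcd hac hcb hbd
    rw [hlt] at hac hcb hbd
    have := fun ha hb hc hd => @h a b c d ha hb hc hd hab hcd
    change z ∈ s(a, b) ↔ z ∉ s(c, d)
    grind

theorem planar_of_path_join (s t : V) (hf : Set.InjOn f {s, t}ᶜ)
    (h : ∀ ⦃a b c⦄, a ∉ ({s, t} : Set V) → b ∉ ({s, t} : Set V) → c ∉ ({s, t} : Set V) →
      G.Adj a b → f a < f c → ¬ f c < f b) : Planar G := by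
  classical
  let k : V → ℕ := fun v => if v = t then 0 else 1
  have hlt : ∀ {a b}, toLex (k a, f a) < toLex (k b, f b) ↔ k a < k b ∨ k a = k b ∧ f a < f b :=
    Prod.Lex.toLex_lt_toLex
  refine planar_of_apex (f := fun v => toLex (k v, f v)) s (fun a ha b hb hab => ?_) ?_
  · have hab : k a = k b ∧ f a = f b := by simpa using hab
    have := fun ha => @hf a ha b
    grind
  · intro a b c d _ hb hc hd _ hcd hac hcb hbd
    rw [hlt] at hac hcb hbd
    have := @h a b c
    have := @h c d b
    grind

end TwoPage

section DegreeTwo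

variable {V W : Type*} {G : SimpleGraph V} {H : SimpleGraph W} {B : W → Set V} {v a b : V}

theorem IsMinorModel.mem_or_mem_of_degree_two (hB : IsMinorModel H G B)
    (hH : ∀ w w₁ w₂, ∃ w₃, H.Adj w w₃ ∧ w₃ ≠ w₁ ∧ w₃ ≠ w₂)
    (hv : ∀ w, G.Adj v w → w = a ∨ w = b) {w : W} (hvw : v ∈ B w) : a ∈ B w ∨ b ∈ B w := by
  by_contra! hnot
  have hsub : ∀ u ∈ B w, u = v := fun u hu => by
    rcases ((reachable_iff_reflTransGen _ _).1
      ((hB.connected w).preconnected ⟨v, hvw⟩ ⟨u, hu⟩)).cases_head with heq | ⟨⟨x, hx⟩, hvx, -⟩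
    · exact (congrArg Subtype.val heq).symm
    · rcases hv x hvx with rfl | rfl
      exacts [absurd hx hnot.1, absurd hx hnot.2]
  have hmem : ∀ w', H.Adj w w' → a ∈ B w' ∨ b ∈ B w' := fun w' hw' => by
    obtain ⟨y, hy, z, hz, hyz⟩ := hB.exists_adj hw'
    obtain rfl := hsub y hy
    rcases hv z hyz with rfl | rfl
    exacts [.inl hz, .inr hz]
  obtain ⟨w₁, h₁, -⟩ := hH w w w
  obtain ⟨w₂, h₂, h₁₂, -⟩ := hH w w₁ w₁
  obtain ⟨w₃, h₃, h₁₃, h₂₃⟩ := hH w w₁ w₂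
  have := @hB.eq_of_mem
  grind

theorem isMinor_deleteIncidenceSet_of_degree_two
    (hH : ∀ w w₁ w₂, ∃ w₃, H.Adj w w₃ ∧ w₃ ≠ w₁ ∧ w₃ ≠ w₂) (hab : G.Adj a b) (hav : a ≠ v)
    (hbv : b ≠ v) (hv : ∀ w, G.Adj v w → w = a ∨ w = b) (h : IsMinor H G) :
    IsMinor H (G.deleteIncidenceSet v) := by
  classical
  obtain ⟨B, hB⟩ := isMinor_iff.1 h
  obtain ⟨c, hc, hcB⟩ : ∃ c, (c = a ∨ c = b) ∧ ∀ w, v ∈ B w → c ∈ B w := by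
    by_cases hex : ∃ w, v ∈ B w
    · obtain ⟨w, hw⟩ := hex
      have heq : ∀ w', v ∈ B w' → w' = w := fun w' hw' => hB.eq_of_mem hw' hw
      rcases hB.mem_or_mem_of_degree_two hH hv hw with h | h
      exacts [⟨a, .inl rfl, fun w' hw' => heq w' hw' ▸ h⟩,
        ⟨b, .inr rfl, fun w' hw' => heq w' hw' ▸ h⟩]
    · exact ⟨a, .inl rfl, fun w hw => absurd ⟨w, hw⟩ hex⟩
  have hσ : IsWeakHom G (G.deleteIncidenceSet v) fun x => if x = v then c else x := by
    intro y z hyz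
    have := hv z
    have := hv y
    simp only [deleteIncidenceSet_adj]
    grind [G.symm, hyz.ne, hyz.symm, hab.symm]
  have hsub : ∀ w, (fun x => if x = v then c else x) '' B w ⊆ B w := by
    rintro w _ ⟨y, hy, rfl⟩
    grind
  exact (hB.image hσ fun w₁ w₂ hne => (hB.disjoint hne).mono (hsub w₁) (hsub w₂)).isMinor

theorem planar_of_degree_two (hG : Planar (G.deleteIncidenceSet v)) (hab : G.Adj a b)
    (hav : a ≠ v) (hbv : b ≠ v) (hv : ∀ w, G.Adj v w → w = a ∨ w = b) : Planar G :=
  ⟨fun h => hG.1 (isMinor_deleteIncidenceSet_of_degree_two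
      (by simp only [K5, top_adj]; decide) hab hav hbv hv h),
    fun h => hG.2 (isMinor_deleteIncidenceSet_of_degree_two
      (by simp only [K33, completeBipartiteGraph_adj]; decide) hab hav hbv hv h)⟩

theorem planar_of_elimination (S : Finset V) (r : V → ℕ) {G₀ : SimpleGraph V} (hG₀ : Planar G₀)
    (hle : ∀ ⦃y z⦄, y ∉ S → z ∉ S → G.Adj y z → G₀.Adj y z)
    (hS : ∀ v ∈ S, ∃ a b, G.Adj a b ∧ (a ∈ S → r v < r a) ∧ (b ∈ S → r v < r b) ∧
      ∀ w, G.Adj v w → w = a ∨ w = b ∨ (w ∈ S ∧ r w < r v)) : Planar G := by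
  classical
  induction S using Finset.induction_on_min_value r generalizing G with
  | empty => exact hG₀.mono fun y z h => hle (Finset.notMem_empty y) (Finset.notMem_empty z) h
  | insert v S _ hmin ih =>
    have hG' : Planar (G.deleteIncidenceSet v) := by
      simp only [Finset.mem_insert] at hle hS
      refine ih (fun y z hy hz hyz => ?_) fun u hu => ?_ <;>
        simp only [deleteIncidenceSet_adj] at *
      · exact hle (by grind) (by grind) hyz.1
      · obtain ⟨a, b, hab, ha, hb, hw⟩ := hS u (.inr hu)
        have := hmin u hu
        exact ⟨a, b, by grind, by grind, by grind, by grind⟩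
    obtain ⟨a, b, hab, ha, hb, hw⟩ := hS v (Finset.mem_insert_self v S)
    refine planar_of_degree_two hG' hab ?_ ?_ fun w hvw => ?_
    all_goals grind

end DegreeTwo

section Cyclic

/-- The position of `k` on the cycle `0, …, n - 1`, counted from `j`. It encodes `k - j` modulo `n`
for `j, k < n`, avoiding subtraction below zero. -/
def cyclicOffset (n j k : ℕ) : ℕ := if j ≤ k then k - j else k + n - j

theorem eq_succ_mod_iff {n i j : ℕ} (hi : i < n) (hj : j < n) :
    j = (i + 1) % n ↔ j = i + 1 ∨ (i + 1 = n ∧ j = 0) := by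
  rcases Nat.lt_or_ge (i + 1) n with h | h
  · rw [Nat.mod_eq_of_lt h]; omega
  · rw [show i + 1 = n by omega, Nat.mod_self]; omega

theorem exists_cyclicOffset_eq {n j k : ℕ} (hj : j < n) (hk : k < n) :
    ∃ l < n, cyclicOffset n j l = k := by
  rcases Nat.lt_or_ge (j + k) n with h | h
  · exact ⟨j + k, h, by simp [cyclicOffset]⟩
  · exact ⟨j + k - n, by omega, by rw [cyclicOffset, if_neg (by omega)]; omega⟩

theorem eq_add_half_mod_iff {n i j : ℕ} (hi : i < 2 * n) (hj : j < 2 * n) :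
    j = (i + n) % (2 * n) ↔ j = i + n ∨ i = j + n := by
  rcases Nat.lt_or_ge (i + n) (2 * n) with h | h
  · rw [Nat.mod_eq_of_lt h]; omega
  · rw [Nat.mod_eq_sub_mod h, Nat.mod_eq_of_lt (by omega)]; omega

end Cyclic

section DoubleWheel

variable {n : ℕ}

theorem doubleWheel_adj_inl_inl (hn : 3 ≤ n) {i j : Fin n} :
    (doubleWheel n).Adj (.inl i) (.inl j) ↔
      j.val = (i.val + 1) % n ∨ i.val = (j.val + 1) % n := by
  have hi := i.2
  have hj := j.2
  simp only [doubleWheel, fromRel_adj, eq_succ_mod_iff hi hj, eq_succ_mod_iff hj hi, ne_eq,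
    Sum.inl.injEq, Fin.ext_iff]
  omega

theorem doubleWheel_adj_inr_inl (k : Fin 2) (i : Fin n) :
    (doubleWheel n).Adj (.inr k) (.inl i) := by
  simp [doubleWheel]

theorem doubleWheel_adj_inr_inr {k l : Fin 2} :
    (doubleWheel n).Adj (.inr k) (.inr l) ↔ k ≠ l := by
  simp [doubleWheel]

theorem exists_inl_of_ne_hubs {k l : Fin 2} (hkl : k ≠ l) {x : Fin n ⊕ Fin 2}
    (hk : x ≠ .inr k) (hl : x ≠ .inr l) : ∃ i, x = .inl i := by
  rcases x with i | m
  · exact ⟨i, rfl⟩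
  · simp only [ne_eq, Sum.inr.injEq] at hk hl
    omega

theorem isMinor_K5_doubleWheel (hn : 3 ≤ n) : IsMinor K5 (doubleWheel n) := by
  let col : Fin n ⊕ Fin 2 → Fin 5 := Sum.elim (fun i => ⟨min i 2, by omega⟩) (Fin.natAdd 3)
  let r : Fin 5 → Fin n ⊕ Fin 2 :=
    ![.inl ⟨0, by omega⟩, .inl ⟨1, by omega⟩, .inl ⟨2, by omega⟩, .inr 0, .inr 1]
  have hr : ∀ w, col (r w) = w := by intro w; fin_cases w <;> simp [col, r]
  refine isMinor_K5_of_descent col r (Sum.elim (·.val) 0) hr ?_ fun w₁ w₂ hlt => ?_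
  · rintro (⟨i, hi⟩ | k) hne
    · have hi2 : 2 < i := by
        by_contra! h
        interval_cases i <;> exact hne rfl
      refine ⟨.inl ⟨i - 1, by omega⟩, ?_, ?_, (doubleWheel_adj_inl_inl hn).2 (.inr ?_)⟩
      · simp only [col, Sum.elim_inl, Fin.mk.injEq]
        omega
      · simp only [Sum.elim_inl]
        omega
      · rw [eq_succ_mod_iff (by omega) (by omega)]
        simp only
        omega
    · fin_cases k <;> exact absurd rfl hne
  · have hlast : col (.inl ⟨n - 1, by omega⟩) = 2 := by
      simp only [col, Sum.elim_inl, Fin.ext_iff]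
      omega
    by_cases h02 : w₁ = 0 ∧ w₂ = 2
    · obtain ⟨rfl, rfl⟩ := h02
      refine ⟨r 0, _, hr 0, hlast, (doubleWheel_adj_inl_inl hn).2 (.inr ?_)⟩
      simp only [Nat.sub_add_cancel (show 1 ≤ n by omega), Nat.mod_self]
    · have h1 : 1 % n = 1 := Nat.mod_eq_of_lt (by omega)
      have h2 : 2 % n = 2 := Nat.mod_eq_of_lt (by omega)
      refine ⟨r w₁, r w₂, hr w₁, hr w₂, ?_⟩
      fin_cases w₁ <;> fin_cases w₂ <;>
        simp [r, doubleWheel_adj_inl_inl hn, doubleWheel_adj_inr_inr,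
          (doubleWheel_adj_inr_inl _ _).symm, h1, h2] at hlt h02 ⊢

theorem planar_doubleWheel_deleteEdges_rim (hn : 3 ≤ n) {i j : Fin n}
    (hij : j.val = (i.val + 1) % n) :
    Planar ((doubleWheel n).deleteEdges {s(.inl i, .inl j)}) := by
  have hi := i.2
  have hj := j.2
  rw [eq_succ_mod_iff hi hj] at hij
  have hrim : ∀ x ∉ ({.inr 0, .inr 1} : Set (Fin n ⊕ Fin 2)), ∃ i, x = .inl i := fun x hx =>
    exists_inl_of_ne_hubs zero_ne_one (fun h => hx (.inl h)) (fun h => hx (.inr h))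
  refine planar_of_path_join (f := Sum.elim (cyclicOffset n j ·.val) (n + ·.val))
    (.inr 0) (.inr 1) ?_ ?_
  · refine Function.Injective.injOn ?_
    rintro (a | a) (b | b) hab <;> grind [cyclicOffset]
  · intro a b c ha hb hc hab
    obtain ⟨a, rfl⟩ := hrim a ha
    obtain ⟨b, rfl⟩ := hrim b hb
    obtain ⟨c, rfl⟩ := hrim c hc
    rw [deleteEdges_adj, doubleWheel_adj_inl_inl hn, eq_succ_mod_iff a.2 b.2,
      eq_succ_mod_iff b.2 a.2] at hab
    simp only [Set.mem_singleton_iff, Sym2.eq_iff, Sum.inl.injEq, Fin.ext_iff] at hab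
    simp only [Sum.elim_inl, cyclicOffset]
    split_ifs <;> omega

theorem planar_doubleWheel_contractEdge_hubs (hn : 3 ≤ n) {k l : Fin 2} (hkl : k ≠ l) :
    Planar (contractEdge (doubleWheel n) (.inr k) (.inr l)) := by
  refine planar_of_path_join (f := Sum.elim (·.val) (n + ·.val))
    (.inr k) (.inl ⟨0, by omega⟩) ?_ ?_
  · refine Function.Injective.injOn ?_
    rintro (a | a) (b | b) hab <;> grind
  · intro a b c ha hb _ hab
    rw [contractEdge_adj] at hab
    obtain ⟨a, rfl⟩ := exists_inl_of_ne_hubs hkl (fun h => ha (.inl h)) hab.2.1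
    obtain ⟨b, rfl⟩ := exists_inl_of_ne_hubs hkl (fun h => hb (.inl h)) hab.2.2.1
    have hadj : (doubleWheel n).Adj (.inl a) (.inl b) := by simpa using hab.2.2.2
    rw [doubleWheel_adj_inl_inl hn, eq_succ_mod_iff a.2 b.2, eq_succ_mod_iff b.2 a.2] at hadj
    simp only [Set.mem_insert_iff, reduceCtorEq, Set.mem_singleton_iff, Sum.inl.injEq,
      Fin.ext_iff, false_or] at ha hb
    rcases c with c | c <;> simp only [Sum.elim_inl, Sum.elim_inr] <;> omega

theorem planar_doubleWheel_contractEdge_spoke (hn : 3 ≤ n) (k : Fin 2) (i : Fin n) :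
    Planar (contractEdge (doubleWheel n) (.inr k) (.inl i)) := by
  refine (planar_doubleWheel_deleteEdges_rim hn (i := i)
    (j := ⟨(i + 1) % n, Nat.mod_lt _ (by omega)⟩) rfl).mono (contractEdge_le_deleteEdges ?_ _)
  rintro (j | l) - hne
  · exact doubleWheel_adj_inr_inl k j
  · exact doubleWheel_adj_inr_inr.2 fun h => hne (congrArg _ h.symm)

theorem almostPlanar_doubleWheel (hn : 3 ≤ n) : AlmostPlanar (doubleWheel n) := by
  refine ⟨fun h => h.1 (isMinor_K5_doubleWheel hn), ?_⟩
  rintro (i | k) (j | l) h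
  · rcases (doubleWheel_adj_inl_inl hn).1 h with hij | hji
    · exact .inl (planar_doubleWheel_deleteEdges_rim hn hij)
    · exact .inl (Sym2.eq_swap ▸ planar_doubleWheel_deleteEdges_rim hn hji)
  · exact planar_deleteEdges_or_contractEdge_symm
      (.inr (planar_doubleWheel_contractEdge_spoke hn l i))
  · exact .inr (planar_doubleWheel_contractEdge_spoke hn k j)
  · exact .inr (planar_doubleWheel_contractEdge_hubs hn (doubleWheel_adj_inr_inr.1 h))

end DoubleWheel

section MobiusLadder

theorem planar_of_apex_nested {V : Type*} {G : SimpleGraph V} {f : V → ℕ} (z : V)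
    (hf : Function.Injective f) (s : ℕ)
    (h : ∀ ⦃a b⦄, a ≠ z → b ≠ z → G.Adj a b → f a < f b → f b = f a + 1 ∨ f a + f b = s) :
    Planar G := by
  refine planar_of_apex z hf.injOn fun a b c d ha hb hc hd hab hcd hac hcb hbd => ?_
  have := h ha hb hab (hac.trans hcb)
  have := h hc hd hcd (hcb.trans hbd)
  omega

variable {n : ℕ}

theorem mobiusLadder_adj (hn : 3 ≤ n) {i j : Fin (2 * n)} :
    (mobiusLadder n).Adj i j ↔ j.val = (i.val + 1) % (2 * n) ∨ i.val = (j.val + 1) % (2 * n) ∨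
      j.val = (i.val + n) % (2 * n) := by
  have hi := i.2
  have hj := j.2
  simp only [mobiusLadder, fromRel_adj, eq_succ_mod_iff hi hj, eq_succ_mod_iff hj hi,
    eq_add_half_mod_iff hi hj, eq_add_half_mod_iff hj hi, ne_eq, Fin.ext_iff]
  omega

/-- The position of `k` when the cycle of `mobiusLadder n` is read from `j` with its second half
reversed: in this order all rungs are nested, and all but two cycle edges join neighbours. -/
def mobiusFold (n j k : ℕ) : ℕ :=
  if cyclicOffset (2 * n) j k < n then cyclicOffset (2 * n) j k
  else 3 * n - 1 - cyclicOffset (2 * n) j k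

theorem mobiusFold_injective (j : Fin (2 * n)) :
    Function.Injective fun k : Fin (2 * n) => mobiusFold n j k := by
  intro a b hab
  have := a.2
  have := b.2
  have := j.2
  simp only [mobiusFold, cyclicOffset] at hab
  ext
  split_ifs at hab <;> omega

theorem mobiusFold_self (hn : 3 ≤ n) (j : ℕ) : mobiusFold n j j = 0 := by
  simp [mobiusFold, cyclicOffset, show 0 < n by omega]

theorem mobiusFold_add_half {j k : Fin (2 * n)} (h : k.val = (j.val + n) % (2 * n)) :
    mobiusFold n j k = 2 * n - 1 := by
  rw [eq_add_half_mod_iff j.2 k.2] at h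
  have := j.2
  have := k.2
  simp only [mobiusFold, cyclicOffset]
  split_ifs <;> omega

theorem mobiusFold_of_adj (hn : 3 ≤ n) (j : Fin (2 * n)) {a b : Fin (2 * n)}
    (hab : (mobiusLadder n).Adj a b) (hlt : mobiusFold n j a < mobiusFold n j b) :
    mobiusFold n j b = mobiusFold n j a + 1 ∨ mobiusFold n j a + mobiusFold n j b = 2 * n - 1 ∨
      (mobiusFold n j a = 0 ∧ mobiusFold n j b = n) ∨
      (mobiusFold n j a = n - 1 ∧ mobiusFold n j b = 2 * n - 1) := by
  have := a.2
  have := b.2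
  have := j.2
  rw [mobiusLadder_adj hn, eq_succ_mod_iff a.2 b.2, eq_succ_mod_iff b.2 a.2,
    eq_add_half_mod_iff a.2 b.2] at hab
  simp only [mobiusFold, cyclicOffset] at hlt ⊢
  split_ifs at hlt ⊢ <;> omega

theorem isMinor_K33_mobiusLadder (hn : 3 ≤ n) : IsMinor K33 (mobiusLadder n) := by
  let col : ℕ → Fin 3 ⊕ Fin 3 := fun v =>
    if v = 0 then .inl 0 else if v = 1 then .inr 0 else if v < n then .inl 1 else
    if v = n then .inr 1 else if v = n + 1 then .inl 2 else .inr 2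
  let r : Fin 3 ⊕ Fin 3 → ℕ := Sum.elim ![0, 2, n + 1] ![1, n, n + 2]
  have hr : ∀ w, col (r w) = w ∧ r w < 2 * n := by
    rintro (w | w) <;> fin_cases w
    exacts [(by grind : col 0 = .inl 0 ∧ 0 < 2 * n), (by grind : col 2 = .inl 1 ∧ 2 < 2 * n),
      (by grind : col (n + 1) = .inl 2 ∧ n + 1 < 2 * n), (by grind : col 1 = .inr 0 ∧ 1 < 2 * n),
      (by grind : col n = .inr 1 ∧ n < 2 * n), (by grind : col (n + 2) = .inr 2 ∧ n + 2 < 2 * n)]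
  refine isMinor_K33_of_descent (fun v => col v) (fun w => ⟨r w, (hr w).2⟩) (·.val)
    (fun w => (hr w).1) ?_ ?_
  · rintro ⟨v, hv⟩ hne
    have hv2 : 2 < v ∧ v < n ∨ n + 2 < v := by
      simp only [col, r, ne_eq, Fin.ext_iff] at hne
      split_ifs at hne <;> simp at hne <;> omega
    refine ⟨⟨v - 1, by omega⟩, by grind, by simp only; omega,
      (mobiusLadder_adj hn).2 (.inr (.inl ?_))⟩
    exact (eq_succ_mod_iff (by omega) hv).2 (by simp only; omega)
  · intro i j
    suffices ∃ a b, col a = .inl i ∧ col b = .inr j ∧ a < 2 * n ∧ b < 2 * n ∧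
        (b = a + 1 ∨ a = b + 1 ∨ b = a + n ∨ a = b + n ∨ (a = 0 ∧ b + 1 = 2 * n)) by
      obtain ⟨a, b, hai, hbj, ha, hb, hab⟩ := this
      refine ⟨⟨a, ha⟩, ⟨b, hb⟩, hai, hbj, (mobiusLadder_adj hn).2 ?_⟩
      rw [eq_succ_mod_iff ha hb, eq_succ_mod_iff hb ha, eq_add_half_mod_iff ha hb]
      omega
    fin_cases i <;> fin_cases j
    · exact ⟨0, 1, by grind⟩
    · exact ⟨0, n, by grind⟩
    · exact ⟨0, 2 * n - 1, by grind⟩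
    · exact ⟨2, 1, by grind⟩
    · exact ⟨n - 1, n, by grind⟩
    · exact ⟨2, n + 2, by grind⟩
    · exact ⟨n + 1, 1, by grind⟩
    · exact ⟨n + 1, n, by grind⟩
    · exact ⟨n + 1, n + 2, by grind⟩

theorem planar_mobiusLadder_deleteEdges_rim (hn : 3 ≤ n) {i j : Fin (2 * n)}
    (hij : j.val = (i.val + 1) % (2 * n)) : Planar ((mobiusLadder n).deleteEdges {s(i, j)}) := by
  let z : Fin (2 * n) := ⟨(j + n) % (2 * n), Nat.mod_lt _ (by omega)⟩
  have hi : mobiusFold n j i = n := by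
    rw [eq_succ_mod_iff i.2 j.2] at hij
    simp only [mobiusFold, cyclicOffset]
    split_ifs <;> omega
  have hinj := mobiusFold_injective j
  refine planar_of_apex_nested z hinj (2 * n - 1) fun a b _ hb hab hlt => ?_
  rw [deleteEdges_adj, Set.mem_singleton_iff, Sym2.eq_iff, not_or] at hab
  rcases mobiusFold_of_adj hn j hab.1 hlt with h | h | ⟨ha0, hbn⟩ | ⟨-, hlast⟩
  · exact .inl h
  · exact .inr h
  · exact absurd ⟨hinj (ha0.trans (mobiusFold_self hn j).symm), hinj (hbn.trans hi.symm)⟩ hab.2.2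
  · exact absurd (hinj (hlast.trans (mobiusFold_add_half rfl).symm)) hb

theorem planar_mobiusLadder_contractEdge_rung (hn : 3 ≤ n) {i j : Fin (2 * n)}
    (hij : j.val = (i.val + n) % (2 * n)) : Planar (contractEdge (mobiusLadder n) i j) := by
  have hinj := mobiusFold_injective i
  refine planar_of_apex_nested i hinj (2 * n - 1) fun a b ha hb hab hlt => ?_
  obtain ⟨-, -, hbj, hab | ⟨rfl, -⟩ | ⟨rfl, -⟩⟩ := contractEdge_adj.1 hab
  · rcases mobiusFold_of_adj hn i hab hlt with h | h | ⟨ha0, -⟩ | ⟨-, hlast⟩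
    · exact .inl h
    · exact .inr h
    · exact absurd (hinj (ha0.trans (mobiusFold_self hn i).symm)) ha
    · exact absurd (hinj (hlast.trans (mobiusFold_add_half hij).symm)) hbj
  · exact absurd rfl ha
  · exact absurd rfl hb

theorem almostPlanar_mobiusLadder (hn : 3 ≤ n) : AlmostPlanar (mobiusLadder n) := by
  refine ⟨fun h => h.2 (isMinor_K33_mobiusLadder hn), fun i j h => ?_⟩
  rcases (mobiusLadder_adj hn).1 h with hij | hji | hij
  · exact .inl (planar_mobiusLadder_deleteEdges_rim hn hij)
  · exact .inl (Sym2.eq_swap ▸ planar_mobiusLadder_deleteEdges_rim hn hji)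
  · exact .inr (planar_mobiusLadder_contractEdge_rung hn hij)

end MobiusLadder

section Fan

theorem exists_mem_ne_ne_of_ncard_eq_three {V : Type*} {T : Set V} (hT : T.ncard = 3) (u v : V) :
    ∃ t ∈ T, t ≠ u ∧ t ≠ v := by
  have huv : ({u, v} : Set V).ncard < T.ncard := by
    have := Set.ncard_insert_le u {v}
    rw [Set.ncard_singleton] at this
    omega
  simpa [not_or] using Set.exists_mem_notMem_of_ncard_lt_ncard huv

theorem eq_insert_pair_of_ncard_eq_three {V : Type*} {T : Set V} (hT : T.ncard = 3) {u v t : V}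
    (hu : u ∈ T) (hv : v ∈ T) (ht : t ∈ T) (huv : u ≠ v) (htu : t ≠ u) (htv : t ≠ v) :
    T = {u, v, t} :=
  .symm <| Set.eq_of_subset_of_ncard_le (by simp [Set.insert_subset_iff, hu, hv, ht])
    (by rw [hT, Set.ncard_eq_three.2 ⟨u, v, t, huv, htu.symm, htv.symm, rfl⟩])
    (Set.finite_of_ncard_ne_zero (by omega))

variable {V : Type*} {G : SimpleGraph V} {P : V → Fin 4} {i : Fin 4} {h : V} {m : ℕ} {c : V → ℕ}

/-- The rim of the wheel with hub `h` on the triangle `P = 0` and the part `P = i`. -/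
def wheelRim (P : V → Fin 4) (i : Fin 4) (h : V) : Set V := {v | (P v = 0 ∨ P v = i) ∧ v ≠ h}

theorem mem_wheelRim {v : V} : v ∈ wheelRim P i h ↔ (P v = 0 ∨ P v = i) ∧ v ≠ h := Iff.rfl

/-- The part `P = i` of a graph in `𝒲`, seen from its hub `h` in the triangle `P = 0`: along `c` the
rim is a path `0, …, m + 1`, whose ends are the other two vertices of the triangle. The rim edge
between these ends is left out. -/
structure IsFan (G : SimpleGraph V) (P : V → Fin 4) (i : Fin 4) (h : V) (m : ℕ) (c : V → ℕ) :
    Prop where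
  ne_zero : i ≠ 0
  hub : P h = 0
  one_le : 1 ≤ m
  bijOn : Set.BijOn c (wheelRim P i h) (Set.Iic (m + 1))
  part_iff : ∀ ⦃v⦄, v ∈ wheelRim P i h → (P v = i ↔ 1 ≤ c v ∧ c v ≤ m)
  adj_hub : ∀ ⦃v⦄, v ∈ wheelRim P i h → G.Adj h v
  adj_iff : ∀ ⦃v w⦄, P v = i → w ∈ wheelRim P i h →
    (G.Adj v w ↔ c v + 1 = c w ∨ c w + 1 = c v)

namespace IsFan

theorem mem_rim (F : IsFan G P i h m c) {v : V} (hv : P v = i) : v ∈ wheelRim P i h :=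
  ⟨.inr hv, fun hvh => F.ne_zero (hv.symm.trans (hvh ▸ F.hub))⟩

theorem le (F : IsFan G P i h m c) {v : V} (hv : v ∈ wheelRim P i h) : c v ≤ m + 1 :=
  F.bijOn.mapsTo hv

theorem bounds (F : IsFan G P i h m c) {v : V} (hv : P v = i) : 1 ≤ c v ∧ c v ≤ m :=
  (F.part_iff (F.mem_rim hv)).1 hv

theorem eq_of_coord_eq (F : IsFan G P i h m c) {v w : V} (hv : v ∈ wheelRim P i h)
    (hw : w ∈ wheelRim P i h) (hvw : c v = c w) : v = w :=
  F.bijOn.injOn hv hw hvw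

theorem exists_eq (F : IsFan G P i h m c) {k : ℕ} (hk : k ≤ m + 1) :
    ∃ v ∈ wheelRim P i h, c v = k :=
  F.bijOn.surjOn hk

theorem exists_part_eq (F : IsFan G P i h m c) {k : ℕ} (h1 : 1 ≤ k) (hm : k ≤ m) :
    ∃ v, P v = i ∧ c v = k := by
  obtain ⟨v, hv, rfl⟩ := F.exists_eq (hm.trans m.le_succ)
  exact ⟨v, (F.part_iff hv).2 ⟨h1, hm⟩, rfl⟩

theorem eq_zero_or_eq_last (F : IsFan G P i h m c) {v : V} (hv : v ∈ wheelRim P i h)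
    (hv0 : P v = 0) : c v = 0 ∨ c v = m + 1 := by
  have := F.le hv
  have := mt (F.part_iff hv).2 fun hvi => F.ne_zero (hvi.symm.trans hv0)
  omega

theorem reverse (F : IsFan G P i h m c) : IsFan G P i h m (fun v => m + 1 - c v) where
  ne_zero := F.ne_zero
  hub := F.hub
  one_le := F.one_le
  bijOn := by
    refine ⟨fun v _ => Nat.sub_le _ _, fun v hv w hw hvw => F.eq_of_coord_eq hv hw ?_,
      fun k hk => ?_⟩
    · have := F.le hv
      have := F.le hw
      simp only at hvw
      omega
    · obtain ⟨v, hv, hvk⟩ := F.exists_eq (Nat.sub_le (m + 1) k)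
      exact ⟨v, hv, by simp only [hvk]; exact Nat.sub_sub_self hk⟩
  part_iff v hv := by
    rw [F.part_iff hv]
    have := F.le hv
    omega
  adj_hub := F.adj_hub
  adj_iff v w hv hw := by
    rw [F.adj_iff hv hw]
    have := F.le hw
    have := F.bounds hv
    omega

theorem exists_coord_eq_zero (F : IsFan G P i h m c) {z : V} (hz : z ∈ wheelRim P i h)
    (hz0 : P z = 0) : ∃ c', IsFan G P i h m c' ∧ c' z = 0 := by
  rcases F.eq_zero_or_eq_last hz hz0 with h0 | h1
  · exact ⟨c, F, h0⟩
  · exact ⟨_, F.reverse, by simp only [h1, Nat.sub_self]⟩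

theorem exists_coord_eq_last (F : IsFan G P i h m c) {z : V} (hz : z ∈ wheelRim P i h)
    (hz0 : P z = 0) : ∃ c', IsFan G P i h m c' ∧ c' z = m + 1 := by
  obtain ⟨c', F', hc'⟩ := F.exists_coord_eq_zero hz hz0
  exact ⟨_, F'.reverse, by simp only [hc', Nat.sub_zero]⟩

theorem exists_adj (F : IsFan G P i h m c) {w : V} (hw : P w = 0) : ∃ v, P v = i ∧ G.Adj w v := by
  by_cases hwh : w = h
  · obtain ⟨v, hv, -⟩ := F.exists_part_eq le_rfl F.one_le
    exact ⟨v, hv, hwh ▸ F.adj_hub (F.mem_rim hv)⟩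
  have hwr : w ∈ wheelRim P i h := ⟨.inl hw, hwh⟩
  rcases F.eq_zero_or_eq_last hwr hw with h0 | h1
  · obtain ⟨v, hv, hv1⟩ := F.exists_part_eq le_rfl F.one_le
    exact ⟨v, hv, ((F.adj_iff hv hwr).2 (by omega)).symm⟩
  · obtain ⟨v, hv, hvm⟩ := F.exists_part_eq F.one_le le_rfl
    exact ⟨v, hv, ((F.adj_iff hv hwr).2 (by omega)).symm⟩

end IsFan

theorem wheelGraph_adj_some_some {n : ℕ} (hn : 3 ≤ n) {k l : Fin n} :
    (wheelGraph n).Adj (some k) (some l) ↔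
      l.val = (k.val + 1) % n ∨ k.val = (l.val + 1) % n := by
  have hk := k.2
  have hl := l.2
  simp only [wheelGraph, fromRel_adj, eq_succ_mod_iff hk hl, eq_succ_mod_iff hl hk, ne_eq,
    Option.some.injEq, Fin.ext_iff]
  omega

theorem wheelGraph_adj_none_some {n : ℕ} (k : Fin n) : (wheelGraph n).Adj none (some k) := by
  simp [wheelGraph]

theorem wheelGraph_three : wheelGraph 3 = ⊤ := by
  ext (_ | a) (_ | b)
  · simp
  · simp [wheelGraph]
  · simp [wheelGraph]
  · rw [wheelGraph_adj_some_some le_rfl, top_adj, ne_eq, Option.some.injEq]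
    omega

theorem IsWheel.exists_iso_apply_eq_none (hG : IsWheel G) {x y z : V} (hxy : G.Adj x y)
    (hxz : G.Adj x z) (hyz : G.Adj y z) :
    ∃ n, 3 ≤ n ∧ ∃ φ : G ≃g wheelGraph n, φ x = none ∨ φ y = none ∨ φ z = none := by
  obtain ⟨n, hn, ⟨φ⟩⟩ := hG
  by_cases hφ : φ x = none ∨ φ y = none ∨ φ z = none
  · exact ⟨n, hn, φ, hφ⟩
  have hn3 : n = 3 := by
    simp only [not_or, ← ne_eq, Option.ne_none_iff_exists'] at hφ
    obtain ⟨⟨a, ha⟩, ⟨b, hb⟩, ⟨d, hd⟩⟩ := hφ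
    rw [← φ.map_adj_iff, ha, hb, wheelGraph_adj_some_some hn, eq_succ_mod_iff a.2 b.2,
      eq_succ_mod_iff b.2 a.2] at hxy
    rw [← φ.map_adj_iff, ha, hd, wheelGraph_adj_some_some hn, eq_succ_mod_iff a.2 d.2,
      eq_succ_mod_iff d.2 a.2] at hxz
    rw [← φ.map_adj_iff, hb, hd, wheelGraph_adj_some_some hn, eq_succ_mod_iff b.2 d.2,
      eq_succ_mod_iff d.2 b.2] at hyz
    omega
  subst hn3
  let σ : wheelGraph 3 ≃g wheelGraph 3 :=
    ⟨Equiv.swap (φ x) none, by simp [wheelGraph_three]⟩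
  exact ⟨3, hn, φ.trans σ, .inl (Equiv.swap_apply_left _ _)⟩

theorem isFan_of_rim {n : ℕ} (hn : 3 ≤ n) {g : Fin n → V} (hg : Function.Injective g) (hi : i ≠ 0)
    (hh : P h = 0) (hrim : wheelRim P i h = Set.range g) (hhub : ∀ k, G.Adj h (g k))
    (hadj : ∀ k l, G.Adj (g k) (g l) ↔ l.val = (k.val + 1) % n ∨ k.val = (l.val + 1) % n)
    {a b : Fin n} (hab : b.val = (a.val + 1) % n) (hpart : ∀ k, P (g k) = 0 ↔ k = a ∨ k = b) :
    IsFan G P i h (n - 2) (Function.extend g (cyclicOffset n b ·) 0) := by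
  have ha := a.2
  have hb := b.2
  rw [eq_succ_mod_iff ha hb] at hab
  have hpart_ne : ∀ k, P (g k) = i ↔ k ≠ a ∧ k ≠ b := fun k => by
    rw [← not_or, ← hpart]
    have := (hrim ▸ Set.mem_range_self k : g k ∈ wheelRim P i h).1
    grind
  refine ⟨hi, hh, by omega, hrim ▸ ⟨?_, ?_, ?_⟩, hrim ▸ ?_, hrim ▸ ?_, hrim ▸ ?_⟩
  · rintro _ ⟨k, rfl⟩
    have := k.2
    rw [hg.extend_apply, Set.mem_Iic, cyclicOffset]
    split_ifs <;> omega
  · rintro _ ⟨k, rfl⟩ _ ⟨l, rfl⟩ hkl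
    have := k.2
    have := l.2
    simp only [hg.extend_apply, cyclicOffset] at hkl
    congr
    ext
    split_ifs at hkl <;> omega
  · intro k hk
    rw [Set.mem_Iic] at hk
    obtain ⟨l, hl, hlk⟩ := exists_cyclicOffset_eq hb (show k < n by omega)
    exact ⟨g ⟨l, hl⟩, Set.mem_range_self _, by rw [hg.extend_apply, hlk]⟩
  · rintro _ ⟨k, rfl⟩
    have := k.2
    rw [hpart_ne, hg.extend_apply, ne_eq, ne_eq, Fin.ext_iff, Fin.ext_iff, cyclicOffset]
    split_ifs <;> omega
  · rintro _ ⟨k, rfl⟩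
    exact hhub k
  · rintro v _ hv ⟨l, rfl⟩
    obtain ⟨k, rfl⟩ : v ∈ Set.range g :=
      hrim ▸ ⟨.inr hv, by rintro rfl; exact hi (hv.symm.trans hh)⟩
    have := k.2
    have := l.2
    rw [hpart_ne, ne_eq, ne_eq, Fin.ext_iff, Fin.ext_iff] at hv
    rw [hadj, eq_succ_mod_iff k.2 l.2, eq_succ_mod_iff l.2 k.2, hg.extend_apply, hg.extend_apply,
      cyclicOffset, cyclicOffset]
    split_ifs <;> omega

theorem exists_hub_rim_of_isWheel (hT : (P ⁻¹' {0}).ncard = 3)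
    (htri : ∀ x y, P x = 0 → P y = 0 → x ≠ y → G.Adj x y)
    (hW : IsWheel (G.induce {v | P v = 0 ∨ P v = i})) :
    ∃ n, 3 ≤ n ∧ ∃ (h : V) (g : Fin n → V), P h = 0 ∧ Function.Injective g ∧
      wheelRim P i h = Set.range g ∧ (∀ k, G.Adj h (g k)) ∧
      ∀ k l, G.Adj (g k) (g l) ↔ l.val = (k.val + 1) % n ∨ k.val = (l.val + 1) % n := by
  obtain ⟨x, y, z, hxy, hxz, hyz, hT_eq⟩ := Set.ncard_eq_three.1 hT
  have hP : ∀ {v}, v ∈ ({x, y, z} : Set V) → P v = 0 := fun hv => (hT_eq.symm ▸ hv : _ ∈ P ⁻¹' {0})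
  have hx : P x = 0 := hP (by simp)
  have hy : P y = 0 := hP (by simp)
  have hz : P z = 0 := hP (by simp)
  obtain ⟨n, hn, φ, hφ⟩ := hW.exists_iso_apply_eq_none (x := ⟨x, .inl hx⟩) (y := ⟨y, .inl hy⟩)
    (z := ⟨z, .inl hz⟩) (htri x y hx hy hxy) (htri x z hx hz hxz) (htri y z hy hz hyz)
  let h : V := φ.symm none
  let g : Fin n → V := fun k => φ.symm (some k)
  have hh : P h = 0 := by
    simp only [h]
    rcases hφ with hφ | hφ | hφ <;> rw [← hφ, φ.symm_apply_apply] <;> assumption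
  have hg : Function.Injective g := fun k l hkl =>
    Option.some_injective _ (φ.symm.injective (Subtype.ext hkl))
  have hhg : ∀ k, h ≠ g k := fun k hk =>
    Option.some_ne_none k (φ.symm.injective (Subtype.ext hk)).symm
  refine ⟨n, hn, h, g, hh, hg, ?_, fun k => φ.symm.map_adj_iff.2 (wheelGraph_adj_none_some k),
    fun k l => φ.symm.map_adj_iff.trans (wheelGraph_adj_some_some hn)⟩
  ext v
  refine ⟨fun ⟨hvS, hvh⟩ => ?_, ?_⟩
  · rcases hk : φ ⟨v, hvS⟩ with - | k
    · exact absurd (by simp only [h, ← hk, φ.symm_apply_apply]) hvh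
    · exact ⟨k, by simp only [g, ← hk, φ.symm_apply_apply]⟩
  · rintro ⟨k, rfl⟩
    exact ⟨(φ.symm (some k)).2, (hhg k).symm⟩

theorem exists_isFan_of_isWheel (hi : i ≠ 0) (hT : (P ⁻¹' {0}).ncard = 3)
    (htri : ∀ x y, P x = 0 → P y = 0 → x ≠ y → G.Adj x y)
    (hW : IsWheel (G.induce {v | P v = 0 ∨ P v = i})) : ∃ h m c, IsFan G P i h m c := by
  obtain ⟨n, hn, h, g, hh, hg, hrim, hhub, hadj⟩ := exists_hub_rim_of_isWheel hT htri hW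
  obtain ⟨p, hp, hph, -⟩ := exists_mem_ne_ne_of_ncard_eq_three hT h h
  obtain ⟨q, hq, hqh, hqp⟩ := exists_mem_ne_ne_of_ncard_eq_three hT h p
  have hT_eq := eq_insert_pair_of_ncard_eq_three hT hh hp hq hph.symm hqh hqp
  obtain ⟨a, rfl⟩ : p ∈ Set.range g := hrim ▸ ⟨.inl hp, hph⟩
  obtain ⟨b, rfl⟩ : q ∈ Set.range g := hrim ▸ ⟨.inl hq, hqh⟩
  have hgh : ∀ k, g k ≠ h := fun k => (hrim ▸ Set.mem_range_self k : g k ∈ wheelRim P i h).2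
  have hpart : ∀ k, P (g k) = 0 ↔ k = a ∨ k = b := fun k => by
    change g k ∈ P ⁻¹' {0} ↔ _
    simp [hT_eq, hgh k, hg.eq_iff]
  rcases (hadj a b).1 (htri _ _ hp hq hqp.symm) with hab | hba
  · exact ⟨_, _, _, isFan_of_rim hn hg hi hh hrim hhub hadj hab hpart⟩
  · exact ⟨_, _, _, isFan_of_rim hn hg hi hh hrim hhub hadj hba fun k => (hpart k).trans or_comm⟩

end Fan

section ClassW

variable {V : Type*} {G D : SimpleGraph V} {P : V → Fin 4} {i : Fin 4} {h : V} {m : ℕ} {c : V → ℕ}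

/-- The partition `P` exhibits `G` as a graph in `𝒲`, with its three wheels given as fans. -/
structure ThreeFans (G : SimpleGraph V) (P : V → Fin 4) : Prop where
  ncard_eq : (P ⁻¹' {0}).ncard = 3
  adj_of_ne : ∀ ⦃x y⦄, P x = 0 → P y = 0 → x ≠ y → G.Adj x y
  part_of_adj : ∀ ⦃x y⦄, G.Adj x y → P x = 0 ∨ P y = 0 ∨ P x = P y
  exists_isFan : ∀ i ≠ 0, ∃ h m c, IsFan G P i h m c

theorem InClassW.exists_threeFans (hG : InClassW G) : ∃ P, ThreeFans G P := by
  obtain ⟨P, hcard, htri, hwheel, hsep⟩ := hG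
  refine ⟨P, hcard, htri, fun x y hxy => ?_,
    fun i hi => exists_isFan_of_isWheel hi hcard htri (hwheel i hi)⟩
  obtain ⟨i, -, hx, hy⟩ := hsep hxy
  grind

theorem exists_complementary_parts : ∀ i : Fin 4, i ≠ 0 → ∃ j k : Fin 4, j ≠ 0 ∧ k ≠ 0 ∧
    j ≠ i ∧ k ≠ i ∧ j ≠ k ∧ ∀ l, l = 0 ∨ l = i ∨ l = j ∨ l = k := by
  decide

namespace ThreeFans

theorem eq_hub_or_consecutive (hG : ThreeFans G P) (F : IsFan G P i h m c) {v w : V}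
    (hv : P v = i) (hvw : G.Adj v w) :
    w = h ∨ w ∈ wheelRim P i h ∧ (c v + 1 = c w ∨ c w + 1 = c v) := by
  rcases eq_or_ne w h with hwh | hwh
  · exact .inl hwh
  have hw : w ∈ wheelRim P i h := by
    refine ⟨?_, hwh⟩
    rcases hG.part_of_adj hvw with hv0 | hw0 | hvw
    · exact absurd (hv.symm.trans hv0) F.ne_zero
    · exact .inl hw0
    · exact .inr (hvw.symm.trans hv)
  exact .inr ⟨hw, (F.adj_iff hv hw).1 hvw⟩

theorem isMinor_K33 (hG : ThreeFans G P) : IsMinor K33 G := by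
  classical
  have hfin : (P ⁻¹' {0}).ncard ≠ 0 := hG.ncard_eq.symm ▸ three_ne_zero
  have : Finite (P ⁻¹' {0}) := Set.finite_of_ncard_ne_zero hfin
  have : Nonempty V := (Set.nonempty_of_ncard_ne_zero hfin).to_subtype.map Subtype.val
  choose! h m c F using hG.exists_isFan
  choose! p hpP hp using fun i hi => (F i hi).exists_part_eq le_rfl (F i hi).one_le
  let e : P ⁻¹' {0} ≃ Fin 3 := Finite.equivFinOfCardEq hG.ncard_eq
  let col : V → Fin 3 ⊕ Fin 3 := fun v =>
    if hv : P v = 0 then .inl (e ⟨v, hv⟩) else .inr ((P v).pred hv)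
  have hcol_inl : ∀ k, col (e.symm k) = .inl k := fun k =>
    (dif_pos (e.symm k).2).trans (by simp)
  have hcol_inr : ∀ {v k}, P v = Fin.succ k → col v = .inr k := fun {v k} hv => by
    simp [col, hv]
  refine isMinor_K33_of_descent col
    (Sum.elim (fun k => e.symm k) fun k => p k.succ) (fun v => c (P v) v) ?_ ?_ ?_
  · rintro (k | k)
    exacts [hcol_inl k, hcol_inr (hpP _ k.succ_ne_zero)]
  · intro v hv
    by_cases hv0 : P v = 0
    · simp [col, hv0] at hv
    obtain ⟨k, hk⟩ := Fin.exists_succ_eq.2 hv0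
    have F := F _ hv0
    rw [hcol_inr hk.symm, Sum.elim_inr, hk] at hv
    have hv1 : c (P v) v ≠ 1 := fun hv1 => hv <|
      F.eq_of_coord_eq (F.mem_rim rfl) (F.mem_rim (hpP _ hv0)) (hv1.trans (hp _ hv0).symm)
    have := F.bounds rfl
    obtain ⟨w, hw, hwv⟩ := F.exists_part_eq (k := c (P v) v - 1) (by omega) (by omega)
    exact ⟨w, (hcol_inr (hw.trans hk.symm)).trans (hcol_inr hk.symm).symm, by rw [hw]; omega,
      (F.adj_iff rfl (F.mem_rim hw)).2 (by omega)⟩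
  · intro k l
    obtain ⟨v, hv, hadj⟩ := (F l.succ l.succ_ne_zero).exists_adj (e.symm k).2
    exact ⟨e.symm k, v, hcol_inl k, hcol_inr hv, hadj⟩

theorem exists_isFan_pair (hG : ThreeFans G P) {j k : Fin 4} (hj : j ≠ 0) (hk : k ≠ 0) :
    ∃ p q z t m n c d, IsFan G P j p m c ∧ IsFan G P k q n d ∧ P ⁻¹' {0} = {p, z, t} ∧
      z ≠ p ∧ z ≠ q ∧ c z = m + 1 ∧ d z = 0 := by
  obtain ⟨p, m, _, F₀⟩ := hG.exists_isFan j hj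
  obtain ⟨q, n, _, F₁⟩ := hG.exists_isFan k hk
  obtain ⟨z, hz, hzp, hzq⟩ := exists_mem_ne_ne_of_ncard_eq_three hG.ncard_eq p q
  obtain ⟨t, ht, htp, htz⟩ := exists_mem_ne_ne_of_ncard_eq_three hG.ncard_eq p z
  obtain ⟨c, Fj, hc⟩ := F₀.exists_coord_eq_last ⟨.inl hz, hzp⟩ hz
  obtain ⟨d, Fk, hd⟩ := F₁.exists_coord_eq_zero ⟨.inl hz, hzq⟩ hz
  exact ⟨p, q, z, t, m, n, c, d, Fj, Fk,
    eq_insert_pair_of_ncard_eq_three hG.ncard_eq Fj.hub hz ht hzp.symm htp htz, hzp, hzq, hc, hd⟩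

theorem planar_induce_compl_part (hG : ThreeFans G P) (hi : i ≠ 0) :
    Planar (G.induce {v | P v ≠ i}).spanningCoe := by
  obtain ⟨j, k, hj, hk, hij, hik, hjk, hcover⟩ := exists_complementary_parts i hi
  obtain ⟨_, _, r, Fi⟩ := hG.exists_isFan i hi
  obtain ⟨p, q, z, t, m, n, c, d, Fj, Fk, hT, hzp, hzq, hcz, hdz⟩ := hG.exists_isFan_pair hj hk
  have hT : ∀ v, P v = 0 ↔ v = p ∨ v = z ∨ v = t := fun v => by
    simpa using Set.ext_iff.1 hT v
  have hz : P z = 0 := (hT z).2 (.inr (.inl rfl))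
  -- Away from `p` and `t` the two fans form one path: part `j`, then `z`, then part `k`.
  let f : V → ℕ := fun v =>
    if P v = i then m + n + 2 + r v else if P v = k then m + 1 + d v else c v
  have hcons : ∀ v w, P v = j ∨ P v = k → w ∉ ({p, t} : Set V) → G.Adj v w →
      f v + 1 = f w ∨ f w + 1 = f v := by
    rintro v w (hv | hv) hw hvw
    · have := hG.eq_hub_or_consecutive Fj hv hvw
      rw [mem_wheelRim] at this
      grind
    · have := hG.eq_hub_or_consecutive Fk hv hvw
      rw [mem_wheelRim] at this
      have := Fk.hub
      grind
  refine planar_of_path_join (f := f) p t (fun v hv w hw hvw => ?_) fun a b _ ha hb _ hab => ?_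
  · have := hcover (P v)
    have := hcover (P w)
    have hzr : z ∈ wheelRim P j p := ⟨.inl hz, hzp⟩
    have := @Fi.eq_of_coord_eq
    have := @Fj.eq_of_coord_eq
    have := @Fk.eq_of_coord_eq
    have := @Fi.mem_rim
    have := @Fj.mem_rim
    have := @Fk.mem_rim
    have := @Fj.bounds
    have := @Fk.bounds
    grind
  · have hab : G.Adj a b ∧ P a ≠ i ∧ P b ≠ i := by simpa using hab
    have := hab.1.symm
    have := hcons a b
    have := hcons b a
    have := hcover (P a)
    have := hcover (P b)
    have := hab.1.ne
    grind

theorem planar_contractEdge_triangle (hG : ThreeFans G P) {u v : V} (hu : P u = 0) (hv : P v = 0)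
    (huv : u ≠ v) : Planar (contractEdge G u v) := by
  have : Nonempty V := ⟨u⟩
  choose! h m c F using hG.exists_isFan
  obtain ⟨t, ht, htu, htv⟩ := exists_mem_ne_ne_of_ncard_eq_three hG.ncard_eq u v
  have hT : ∀ w, P w = 0 → w = u ∨ w = v ∨ w = t := by
    have := eq_insert_pair_of_ncard_eq_three hG.ncard_eq hu hv ht huv htu htv
    intro w hw
    simpa using (this ▸ hw : w ∈ ({u, v, t} : Set V))
  have hlt : ∀ {a b}, toLex (P a, c (P a) a) < toLex (P b, c (P b) b) ↔
      P a < P b ∨ P a = P b ∧ c (P a) a < c (P b) b := Prod.Lex.toLex_lt_toLex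
  refine planar_of_path_join (f := fun w => toLex (P w, c (P w) w)) u t
    (fun a ha b hb hab => ?_) fun a b _ ha hb _ hab => ?_
  · obtain ⟨hP, hc⟩ : P a = P b ∧ c (P a) a = c (P b) b := by simpa using hab
    by_cases ha0 : P a = 0
    · grind
    · exact (F _ ha0).eq_of_coord_eq ((F _ ha0).mem_rim rfl) ((F _ ha0).mem_rim hP.symm) (by grind)
  · rw [contractEdge_adj] at hab
    have hpart : P a ≠ 0 ∧ P b = P a := by
      have := @hG.part_of_adj a b
      grind
    have := ((F _ hpart.1).adj_iff rfl ((F _ hpart.1).mem_rim hpart.2)).1 (by grind)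
    rw [hlt, hlt]
    grind

theorem planar_of_cut (hG : ThreeFans G P) (F : IsFan G P i h m c) (hD : D ≤ G)
    (hhub : ∀ v ∈ wheelRim P i h, D.Adj h v) {j : ℕ} (hj : j ≤ m)
    (hcut : ∀ a b, c a = j → c b = j + 1 → a ∈ wheelRim P i h → b ∈ wheelRim P i h → ¬ D.Adj a b) :
    Planar D := by
  have hfin : {v | P v = i}.Finite :=
    ((Set.finite_Iic (m + 1)).of_injOn F.bijOn.mapsTo F.bijOn.injOn).subset fun v => F.mem_rim
  have hhub0 : P h ≠ i := F.hub ▸ F.ne_zero.symm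
  have hle : (∀ ⦃y z⦄, P y ≠ i → P z ≠ i → D.Adj y z →
      (G.induce {v | P v ≠ i}).spanningCoe.Adj y z) := fun y z hy hz hyz =>
    (map_adj _ _ _ _).2 ⟨⟨y, hy⟩, ⟨z, hz⟩, hD hyz, rfl, rfl⟩
  -- Eliminating outwards from the cut, each vertex is left with its outer neighbour and the hub.
  refine planar_of_elimination hfin.toFinset (fun v => if c v ≤ j then j - c v else c v)
    (hG.planar_induce_compl_part F.ne_zero) (by simpa using hle) fun v hv => ?_
  simp only [Set.Finite.mem_toFinset, Set.mem_ofPred_eq] at hv ⊢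
  have hbd := F.bounds hv
  obtain ⟨a, ha, hca⟩ := F.exists_eq (k := if c v ≤ j then c v - 1 else c v + 1)
    (by split_ifs <;> omega)
  refine ⟨a, h, (hhub a ha).symm, fun _ => by grind, fun hhi => absurd hhi hhub0, fun w hvw => ?_⟩
  rcases hG.eq_hub_or_consecutive F hv (hD hvw) with hw | ⟨hw, hvw'⟩
  · exact .inr (.inl hw)
  by_cases hwa : c w = c a
  · exact .inl (F.eq_of_coord_eq hw ha hwa)
  have := hcut v w
  have := hcut w v
  have := F.part_iff hw
  have := F.mem_rim hv
  have := hvw.symm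
  grind

theorem planar_deleteEdges_rim (hG : ThreeFans G P) (F : IsFan G P i h m c) {a b : V}
    (ha : a ∈ wheelRim P i h) (hb : b ∈ wheelRim P i h) (hab : c a + 1 = c b) :
    Planar (G.deleteEdges {s(a, b)}) := by
  have hcb := F.le hb
  refine hG.planar_of_cut F (deleteEdges_le _) (fun v hv => ?_) (j := c a) (by omega)
    fun a' b' ha' hb' hra hrb => ?_
  · rw [deleteEdges_adj, Set.mem_singleton_iff, Sym2.eq_iff]
    exact ⟨F.adj_hub hv, by rintro (⟨rfl, -⟩ | ⟨rfl, -⟩); exacts [ha.2 rfl, hb.2 rfl]⟩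
  · rw [F.eq_of_coord_eq hra ha ha', F.eq_of_coord_eq hrb hb (hb'.trans hab)]
    simp

theorem planar_deleteEdges_of_mem_rim (hG : ThreeFans G P) (F : IsFan G P i h m c) {v w : V}
    (hv : P v = i) (hw : w ∈ wheelRim P i h) (hvw : G.Adj v w) :
    Planar (G.deleteEdges {s(v, w)}) := by
  rcases (F.adj_iff hv hw).1 hvw with hlt | hlt
  · exact hG.planar_deleteEdges_rim F (F.mem_rim hv) hw hlt
  · exact Sym2.eq_swap ▸ hG.planar_deleteEdges_rim F hw (F.mem_rim hv) hlt

theorem planar_contractEdge_hub (hG : ThreeFans G P) (F : IsFan G P i h m c) {v : V}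
    (hv : P v = i) : Planar (contractEdge G h v) := by
  obtain ⟨w, hw, hwv⟩ := F.exists_eq (k := c v + 1) (by have := F.bounds hv; omega)
  refine (hG.planar_deleteEdges_rim F (F.mem_rim hv) hw hwv.symm).mono
    (contractEdge_le_deleteEdges (fun x hvx hxh => ?_) w)
  exact F.adj_hub ((hG.eq_hub_or_consecutive F hv hvx).resolve_left hxh).1

theorem planar_deleteEdges_or_contractEdge (hG : ThreeFans G P) {v w : V} (hv : P v ≠ 0)
    (hvw : G.Adj v w) : Planar (G.deleteEdges {s(v, w)}) ∨ Planar (contractEdge G v w) := by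
  obtain ⟨h, m, c, F⟩ := hG.exists_isFan _ hv
  rcases hG.eq_hub_or_consecutive F rfl hvw with rfl | ⟨hw, -⟩
  · exact planar_deleteEdges_or_contractEdge_symm (.inr (hG.planar_contractEdge_hub F rfl))
  · exact .inl (hG.planar_deleteEdges_of_mem_rim F rfl hw hvw)

theorem almostPlanar (hG : ThreeFans G P) : AlmostPlanar G := by
  refine ⟨fun h => h.2 hG.isMinor_K33, fun u v huv => ?_⟩
  by_cases hu : P u = 0
  · by_cases hv : P v = 0
    · exact .inr (hG.planar_contractEdge_triangle hu hv huv.ne)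
    · exact planar_deleteEdges_or_contractEdge_symm
        (hG.planar_deleteEdges_or_contractEdge hv huv.symm)
  · exact hG.planar_deleteEdges_or_contractEdge hu huv

end ThreeFans

theorem InClassW.almostPlanar (hG : InClassW G) : AlmostPlanar G :=
  let ⟨_, hP⟩ := hG.exists_threeFans
  hP.almostPlanar

end ClassW

theorem stmt1_general :
    (∀ n : ℕ, 3 ≤ n → AlmostPlanar (mobiusLadder n)) ∧
    (∀ n : ℕ, 3 ≤ n → AlmostPlanar (doubleWheel n)) ∧
    (∀ (U : Type*) (H : SimpleGraph U), InClassW H → AlmostPlanar H) ∧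
    (∀ (V : Type*) (G : SimpleGraph V), ¬ Planar G →
      ((∃ n, 3 ≤ n ∧ IsMinor G (mobiusLadder n)) ∨
       (∃ n, 3 ≤ n ∧ IsMinor G (doubleWheel n)) ∨
       (∃ (U : Type*) (H : SimpleGraph U), InClassW H ∧ IsMinor G H)) →
      AlmostPlanar G) := by
  refine ⟨fun n hn => almostPlanar_mobiusLadder hn, fun n hn => almostPlanar_doubleWheel hn,
    fun U H hH => hH.almostPlanar, fun V G hG => ?_⟩
  rintro (⟨n, hn, hGM⟩ | ⟨n, hn, hGD⟩ | ⟨U, H, hH, hGH⟩)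
  · exact (almostPlanar_mobiusLadder hn).of_isMinor hGM hG
  · exact (almostPlanar_doubleWheel hn).of_isMinor hGD hG
  · exact hH.almostPlanar.of_isMinor hGH hG

/-- Every Möbius ladder, every double wheel, and every graph in 𝒲 is almost-planar;
consequently every 3-connected nonplanar minor of one of these is almost-planar. -/
theorem stmt1 :
    (∀ n : ℕ, 3 ≤ n → AlmostPlanar (mobiusLadder n)) ∧
    (∀ n : ℕ, 3 ≤ n → AlmostPlanar (doubleWheel n)) ∧
    (∀ (U : Type) (H : SimpleGraph U), InClassW H → AlmostPlanar H) ∧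
    (∀ (V : Type) [Fintype V] (G : SimpleGraph V), KConnected G 3 → ¬ Planar G →
      ((∃ n, 3 ≤ n ∧ IsMinor G (mobiusLadder n)) ∨
       (∃ n, 3 ≤ n ∧ IsMinor G (doubleWheel n)) ∨
       (∃ (U : Type) (H : SimpleGraph U), InClassW H ∧ IsMinor G H)) →
      AlmostPlanar G) :=
  let ⟨hM, hD, hW, hminor⟩ := stmt1_general
  ⟨hM, hD, hW, fun V _ G _ => hminor V G⟩
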